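/- arXiv:1904.07022 — 8 statements merged into one kernel-verified Lean document; each statement's English description precedes it below -/
import Mathlib

section
/- Let L ∈ ℝ^{n×n} be the Laplacian matrix of a weighted digraph on n ≥ 1 vertices that has a directed spanning tree. Then rank(L) = n − 1. -/
/-- Maximum principle: a harmonic function attains its maximum at the root. -/
lemma harmonic_le_root {n : ℕ} (A : Matrix (Fin n) (Fin n) ℝ)
    (hA_nonneg : ∀ i j, 0 ≤ A i j) (r : Fin n)
    (htree : ∀ i, Relation.ReflTransGen (fun u v => 0 < A v u) r i)
    (x : Fin n → ℝ) (hx : ∀ i, ∑ j, A i j * (x i - x j) = 0) (i : Fin n) : x i ≤ x r := by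
  haveI : Nonempty (Fin n) := ⟨r⟩
  obtain ⟨m, hm⟩ := Finite.exists_max x
  have key : x r = x m := by
    refine Relation.ReflTransGen.head_induction_on (motive := fun a _ => x a = x m)
      (htree m) rfl ?_
    intro a c hac _ hc
    have h0 := (Finset.sum_eq_zero_iff_of_nonneg (fun j _ =>
      mul_nonneg (hA_nonneg c j) (sub_nonneg.2 (hc ▸ hm j)))).1 (hx c) a (Finset.mem_univ a)
    rcases mul_eq_zero.1 h0 with h | h
    · exact absurd h hac.ne'
    · linarith
  rw [key]
  exact hm i

/-- The Laplacian matrix of a weighted digraph on `n ≥ 1` vertices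
that has a directed spanning tree has rank `n - 1`. -/
theorem laplacian_rank_of_spanning_tree {n : ℕ} (hn : 1 ≤ n)
    (A : Matrix (Fin n) (Fin n) ℝ)
    (hA_nonneg : ∀ i j, 0 ≤ A i j)
    (hA_diag : ∀ i, A i i = 0)
    (L : Matrix (Fin n) (Fin n) ℝ)
    (hL : ∀ i j, L i j = (if i = j then ∑ k, A i k else 0) - A i j)
    (r : Fin n)
    (htree : ∀ i, Relation.ReflTransGen (fun u v => 0 < A v u) r i) :
    L.rank = n - 1 := by
  have hmul : ∀ (x : Fin n → ℝ) i, L.mulVec x i = ∑ j, A i j * (x i - x j) := by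
    intro x i
    simp only [Matrix.mulVec, dotProduct, hL, sub_mul, ite_mul, zero_mul, mul_sub,
      Finset.sum_sub_distrib, Finset.sum_ite_eq, Finset.mem_univ, if_true, Finset.sum_mul]
  have hker : LinearMap.ker L.mulVecLin = Submodule.span ℝ {(fun _ => 1 : Fin n → ℝ)} := by
    ext x
    rw [LinearMap.mem_ker, Matrix.mulVecLin_apply, Submodule.mem_span_singleton]
    constructor
    · intro h
      have hx : ∀ i, ∑ j, A i j * (x i - x j) = 0 := fun i => by
        rw [← hmul, h]; rfl
      refine ⟨x r, funext fun i => ?_⟩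
      have h1 := harmonic_le_root A hA_nonneg r htree x hx i
      have h2 := harmonic_le_root A hA_nonneg r htree (fun k => - x k) (fun i => by
        rw [← neg_eq_zero, ← Finset.sum_neg_distrib, ← hx i]
        exact Finset.sum_congr rfl fun j _ => by ring) i
      simp only [Pi.smul_apply, smul_eq_mul, mul_one]
      linarith
    · rintro ⟨c, rfl⟩
      funext i
      rw [hmul]
      simp
  have hrn := LinearMap.finrank_range_add_finrank_ker L.mulVecLin
  rw [hker, finrank_span_singleton (fun h => one_ne_zero (congrFun h r)),
    Module.finrank_fin_fun] at hrn
  rw [Matrix.rank]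
  omega
end

section
/- Let L ∈ ℝ^{n×n} be the Laplacian matrix of a weighted digraph on n vertices that has a directed spanning tree. Then there exists a nonnegative vector ξ ∈ ℝⁿ with Σ_{i=1}^n ξ_i = 1 such that ξᵀL = 0. -/
/-- The Laplacian matrix of a weighted digraph that has a directed
spanning tree admits a nonnegative left null vector with unit component sum. -/
theorem laplacian_left_null_vector_of_spanning_tree {n : ℕ}
    (A : Matrix (Fin n) (Fin n) ℝ)
    (hA_nonneg : ∀ i j, 0 ≤ A i j)
    (hA_diag : ∀ i, A i i = 0)
    (L : Matrix (Fin n) (Fin n) ℝ)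
    (hL : ∀ i j, L i j = (if i = j then ∑ k, A i k else 0) - A i j)
    (r : Fin n)
    (htree : ∀ i, Relation.ReflTransGen (fun u v => 0 < A v u) r i) :
    ∃ ξ : Fin n → ℝ, (∀ i, 0 ≤ ξ i) ∧ (∑ i, ξ i = 1) ∧
      (∀ j, ∑ i, ξ i * L i j = 0) := by
  have key : ∀ (x : Fin n → ℝ) (j : Fin n),
      ∑ i, x i * L i j = x j * (∑ k, A j k) - ∑ i, x i * A i j := by
    intro x j
    simp [hL, mul_sub, Finset.sum_sub_distrib]
  have hdet : L.det = 0 := by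
    rw [← Matrix.exists_mulVec_eq_zero_iff]
    refine ⟨fun _ => 1, fun h => one_ne_zero (congrFun h r), ?_⟩
    funext i
    simp [Matrix.mulVec, dotProduct, hL, Finset.sum_sub_distrib]
  obtain ⟨v, hv0, hv⟩ := Matrix.exists_vecMul_eq_zero_iff.mpr hdet
  have hvj : ∀ j, v j * (∑ k, A j k) = ∑ i, v i * A i j := by
    intro j
    have h : ∑ i, v i * L i j = 0 := congrFun hv j
    rw [key] at h
    linarith
  have hle : ∀ j ∈ Finset.univ, |v j| * (∑ k, A j k) ≤ ∑ i, |v i| * A i j := by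
    intro j _
    have h1 : |v j| * (∑ k, A j k) = |∑ i, v i * A i j| := by
      rw [← hvj j, abs_mul, abs_of_nonneg (Finset.sum_nonneg fun k _ => hA_nonneg j k)]
    rw [h1]
    refine (Finset.abs_sum_le_sum_abs _ _).trans (le_of_eq ?_)
    refine Finset.sum_congr rfl fun i _ => ?_
    rw [abs_mul, abs_of_nonneg (hA_nonneg i j)]
  have hsum : ∑ j, |v j| * (∑ k, A j k) = ∑ j, ∑ i, |v i| * A i j := by
    rw [Finset.sum_comm]
    simp [Finset.mul_sum]
  have heq := (Finset.sum_eq_sum_iff_of_le hle).mp hsum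
  have hS : 0 < ∑ i, |v i| := by
    obtain ⟨i, hi⟩ := Function.ne_iff.mp hv0
    exact Finset.sum_pos' (fun i _ => abs_nonneg _) ⟨i, Finset.mem_univ i, abs_pos.mpr hi⟩
  refine ⟨fun i => (∑ i, |v i|)⁻¹ * |v i|, fun i => by positivity, ?_, fun j => ?_⟩
  · rw [← Finset.mul_sum, inv_mul_cancel₀ hS.ne']
  · simp only [mul_assoc]
    rw [← Finset.mul_sum, key (fun i => |v i|), heq j (Finset.mem_univ j), sub_self, mul_zero]
end

section
/- Let L ∈ ℝ^{n×n} be the Laplacian matrix of a strongly connected weighted digraph on n vertices, let ξ ∈ ℝⁿ be a strictly positive vector with ξᵀL = 0, and set Ξ = diag(ξ). Then the matrix M = ΞL + LᵀΞ is symmetric, all its row sums are zero, M is positive semidefinite, and its kernel is exactly the span of the all-ones vector 𝟙ₙ (i.e., Mx = 0 iff all components of x are equal); in particular, zero is an eigenvalue of M of multiplicity one. -/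
open Matrix

/-- For a strongly connected weighted digraph with Laplacian `L`
and positive left null vector `ξ`, the matrix `M = ΞL + LᵀΞ` is symmetric,
has zero row sums, is positive semidefinite, and its kernel is the span of
the all-ones vector (so zero is an eigenvalue of multiplicity one). -/
theorem laplacian_symmetrization_properties {n : ℕ}
    (A : Matrix (Fin n) (Fin n) ℝ)
    (hA_nonneg : ∀ i j, 0 ≤ A i j)
    (hA_diag : ∀ i, A i i = 0)
    (L : Matrix (Fin n) (Fin n) ℝ)
    (hL : ∀ i j, L i j = (if i = j then ∑ k, A i k else 0) - A i j)
    (hconn : ∀ i j : Fin n, Relation.ReflTransGen (fun u v => 0 < A v u) i j)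
    (ξ : Fin n → ℝ) (hξpos : ∀ i, 0 < ξ i)
    (hξL : ∀ j, ∑ i, ξ i * L i j = 0)
    (M : Matrix (Fin n) (Fin n) ℝ)
    (hM : M = Matrix.diagonal ξ * L + Lᵀ * Matrix.diagonal ξ) :
    Mᵀ = M ∧
    (∀ i, ∑ j, M i j = 0) ∧
    (∀ x : Fin n → ℝ, 0 ≤ x ⬝ᵥ M.mulVec x) ∧
    (∀ x : Fin n → ℝ, M.mulVec x = 0 ↔ ∀ i j, x i = x j) := by
  have hMij : ∀ i j, M i j = ξ i * L i j + L j i * ξ j := by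
    intro i j
    rw [hM]
    simp [Matrix.diagonal_mul, Matrix.mul_diagonal]
  have hsym : ∀ i j, M i j = M j i := by
    intro i j
    rw [hMij, hMij]; ring
  have hLrow : ∀ i, ∑ j, L i j = 0 := by
    intro i
    simp [hL, Finset.sum_sub_distrib]
  have hrow : ∀ i, ∑ j, M i j = 0 := by
    intro i
    simp_rw [hMij, Finset.sum_add_distrib, ← Finset.mul_sum, hLrow]
    simp_rw [mul_comm (L _ i), hξL]
    simp
  have hcol : ∀ j, ∑ i, M i j = 0 := by
    intro j
    rw [← hrow j]
    exact Finset.sum_congr rfl fun i _ => hsym i j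
  have hterm : ∀ (x : Fin n → ℝ) i j, M i j * (x i - x j) ^ 2 =
      -(ξ i * A i j * (x i - x j) ^ 2) - ξ j * A j i * (x j - x i) ^ 2 := by
    intro x i j
    by_cases h : i = j
    · subst h; simp
    · rw [hMij, hL, hL, if_neg h, if_neg (Ne.symm h)]; ring
  have hq : ∀ x : Fin n → ℝ, x ⬝ᵥ M.mulVec x = ∑ i, ∑ j, ξ i * A i j * (x i - x j) ^ 2 := by
    intro x
    have h1 : ∑ i, ∑ j, M i j * (x i - x j) ^ 2 =
        -2 * ∑ i, ∑ j, ξ i * A i j * (x i - x j) ^ 2 := by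
      simp_rw [hterm, Finset.sum_sub_distrib, Finset.sum_neg_distrib]
      rw [Finset.sum_comm (f := fun i j => ξ j * A j i * (x j - x i) ^ 2)]
      ring
    have h2 : ∑ i, ∑ j, M i j * (x i - x j) ^ 2 = -2 * (x ⬝ᵥ M.mulVec x) := by
      have e : ∀ i j, M i j * (x i - x j) ^ 2 =
          x i ^ 2 * M i j + x j ^ 2 * M i j + -2 * (x i * (M i j * x j)) := by
        intro i j; ring
      simp_rw [e, Finset.sum_add_distrib]
      rw [Finset.sum_comm (f := fun i j => x j ^ 2 * M i j)]
      simp_rw [← Finset.mul_sum, hrow, hcol]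
      simp [dotProduct, Matrix.mulVec]
    linarith
  have hnn : ∀ (x : Fin n → ℝ) i j, 0 ≤ ξ i * A i j * (x i - x j) ^ 2 := fun x i j =>
    mul_nonneg (mul_nonneg (hξpos i).le (hA_nonneg i j)) (sq_nonneg _)
  refine ⟨?_, hrow, ?_, ?_⟩
  · ext i j; exact hsym j i
  · intro x
    rw [hq]
    exact Finset.sum_nonneg fun i _ => Finset.sum_nonneg fun j _ => hnn x i j
  · intro x
    constructor
    · intro h
      have h0 := hq x
      rw [h, dotProduct_zero] at h0
      have hz : ∀ i j, ξ i * A i j * (x i - x j) ^ 2 = 0 := by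
        intro i j
        have h3 := (Finset.sum_eq_zero_iff_of_nonneg
          (fun i _ => Finset.sum_nonneg fun j _ => hnn x i j)).1 h0.symm i (Finset.mem_univ i)
        exact (Finset.sum_eq_zero_iff_of_nonneg (fun j _ => hnn x i j)).1 h3 j (Finset.mem_univ j)
      intro i j
      induction hconn i j with
      | refl => rfl
      | @tail b c _ hbc ih =>
        rw [ih]
        have h4 := hz c b
        have h5 : ξ c * A c b ≠ 0 := (mul_pos (hξpos c) hbc).ne'
        have h6 : (x c - x b) ^ 2 = 0 := (mul_eq_zero.1 h4).resolve_left h5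
        have h7 := pow_eq_zero_iff (two_ne_zero) |>.1 h6
        linarith
    · intro h
      ext i
      simp only [Matrix.mulVec, dotProduct, Pi.zero_apply]
      simp_rw [fun j => h j i]
      rw [← Finset.sum_mul, hrow, zero_mul]
end

section
/- Let L ∈ ℝ^{n×n} have all row sums equal to zero and nonpositive off-diagonal entries (L_{ij} ≤ 0 for i ≠ j), and let ξ ∈ ℝⁿ be nonnegative with ξᵀL = 0. For vectors y_1, …, y_n, e_1, …, e_n ∈ ℝᵖ define q_i = −(1/2) Σ_{j=1}^n L_{ij} ‖y_j − y_i‖². Then each q_i ≥ 0 and − Σ_{i=1}^n ξ_i ⟨y_i, Σ_{j=1}^n L_{ij}(y_j + e_j)⟩ ≤ −(1/2) Σ_{i=1}^n ξ_i q_i + Σ_{i=1}^n ξ_i L_{ii} ‖e_i‖². -/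
open Matrix
open scoped RealInnerProductSpace

/-- For `L` with zero row sums and nonpositive off-diagonal
entries, and nonnegative `ξ` with `ξᵀL = 0`, with
`q_i = −(1/2) Σ_j L_{ij} ‖y_j − y_i‖²`, each `q_i ≥ 0` and
`−Σ_i ξ_i ⟨y_i, Σ_j L_{ij}(y_j + e_j)⟩ ≤ −(1/2) Σ_i ξ_i q_i + Σ_i ξ_i L_{ii} ‖e_i‖²`. -/
theorem event_triggered_derivative_bound {n p : ℕ}
    (L : Matrix (Fin n) (Fin n) ℝ)
    (hrow : ∀ i, ∑ j, L i j = 0)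
    (hoff : ∀ i j, i ≠ j → L i j ≤ 0)
    (ξ : Fin n → ℝ) (hξ_nonneg : ∀ i, 0 ≤ ξ i)
    (hξL : ∀ j, ∑ i, ξ i * L i j = 0)
    (y e : Fin n → EuclideanSpace ℝ (Fin p))
    (q : Fin n → ℝ)
    (hq : ∀ i, q i = -(1 / 2) * ∑ j, L i j * ‖y j - y i‖ ^ 2) :
    (∀ i, 0 ≤ q i) ∧
    -∑ i, ξ i * ⟪y i, ∑ j, L i j • (y j + e j)⟫ ≤
      -(1 / 2) * ∑ i, ξ i * q i + ∑ i, ξ i * L i i * ‖e i‖ ^ 2 := by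
  refine ⟨?_, ?_⟩
  · intro i
    rw [hq]
    have h : ∑ j, L i j * ‖y j - y i‖ ^ 2 ≤ 0 := by
      apply Finset.sum_nonpos
      intro j _
      by_cases hij : i = j
      · subst hij
        simp
      · exact mul_nonpos_of_nonpos_of_nonneg (hoff i j hij) (sq_nonneg _)
    linarith
  · have key : ∀ i j, -(ξ i * L i j * ⟪y i, y j + e j⟫) ≤
        1 / 4 * (ξ i * L i j * ‖y j - y i‖ ^ 2)
        + (if i = j then ξ i * L i j * ‖e j‖ ^ 2 else 0)
        - ξ i * L i j * (‖y i‖ ^ 2 / 2)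
        - ξ i * L i j * (‖y j‖ ^ 2 / 2 + ⟪y j, e j⟫ + ‖e j‖ ^ 2) := by
      intro i j
      by_cases hij : i = j
      · subst hij
        simp only [if_true, sub_self, norm_zero, inner_add_right, real_inner_self_eq_norm_sq]
        apply le_of_eq
        ring
      · rw [if_neg hij]
        have ha : 0 ≤ -(ξ i * L i j) := by
          have := mul_nonpos_of_nonneg_of_nonpos (hξ_nonneg i) (hoff i j hij)
          linarith
        have h1 := norm_sub_sq_real (y j) (y i)
        have h2 : 0 ≤ ‖(1 / 2 : ℝ) • (y j - y i) + e j‖ ^ 2 := sq_nonneg _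
        rw [norm_add_sq_real, norm_smul, mul_pow, real_inner_smul_left, inner_sub_left] at h2
        norm_num at h2
        rw [inner_add_right]
        rw [real_inner_comm] at h1
        have h3 : ⟪y i, y j⟫ + ⟪y i, e j⟫ ≤ - (1 / 4 * ‖y j - y i‖ ^ 2) + ‖y i‖ ^ 2 / 2
          + (‖y j‖ ^ 2 / 2 + ⟪y j, e j⟫ + ‖e j‖ ^ 2) := by
          linarith
        have h4 := mul_le_mul_of_nonneg_left h3 ha
        linarith
    have hs := Finset.sum_le_sum (s := Finset.univ) fun i _ =>
      Finset.sum_le_sum (s := Finset.univ) fun j _ => key i j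
    have z1 : ∑ i, ∑ j, ξ i * L i j * (‖y i‖ ^ 2 / 2) = 0 := by
      apply Finset.sum_eq_zero
      intro i _
      rw [← Finset.sum_mul, ← Finset.mul_sum, hrow]
      simp
    have z2 : ∑ i, ∑ j, ξ i * L i j * (‖y j‖ ^ 2 / 2 + ⟪y j, e j⟫ + ‖e j‖ ^ 2) = 0 := by
      rw [Finset.sum_comm]
      apply Finset.sum_eq_zero
      intro j _
      rw [← Finset.sum_mul, hξL, zero_mul]
    simp only [Finset.sum_sub_distrib, Finset.sum_add_distrib, z1, z2, Finset.sum_neg_distrib,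
      Finset.sum_ite_eq, Finset.mem_univ, if_true, sub_zero] at hs
    have l : ∑ i, ξ i * ⟪y i, ∑ j, L i j • (y j + e j)⟫
        = ∑ i, ∑ j, ξ i * L i j * ⟪y i, y j + e j⟫ := by
      simp only [inner_sum, real_inner_smul_right, Finset.mul_sum, mul_assoc]
    have r : -(1 / 2) * ∑ i, ξ i * q i
        = ∑ i, ∑ j, 1 / 4 * (ξ i * L i j * ‖y j - y i‖ ^ 2) := by
      simp only [hq, Finset.mul_sum]
      refine Finset.sum_congr rfl fun i _ => Finset.sum_congr rfl fun j _ => ?_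
      ring
    rw [l, r]
    exact hs
end

section
/- Let L̃ ∈ ℝ^{m×m} be the Laplacian matrix of a strongly connected weighted digraph on m vertices, let ξ ∈ ℝᵐ be strictly positive with ξᵀL̃ = 0, and set Ξ = diag(ξ). Let D ∈ ℝ^{m×m} be a diagonal matrix with nonnegative diagonal entries, at least one of which is strictly positive. Then Q = (1/2)(Ξ(L̃ + D) + (L̃ + D)ᵀΞ) is positive definite; equivalently, yᵀΞ(L̃ + D)y > 0 for every nonzero y ∈ ℝᵐ. -/
open Matrix

/-- For the Laplacian `L̃` of a strongly connected weighted
digraph, a positive left null vector `ξ` with `Ξ = diag(ξ)`, and a nonnegative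
diagonal matrix `D` with at least one positive diagonal entry, the matrix
`Q = (1/2)(Ξ(L̃ + D) + (L̃ + D)ᵀΞ)` is positive definite; equivalently,
`yᵀΞ(L̃ + D)y > 0` for every nonzero `y`. -/
theorem grounded_laplacian_posdef {m : ℕ}
    (A : Matrix (Fin m) (Fin m) ℝ)
    (hA_nonneg : ∀ i j, 0 ≤ A i j)
    (hA_diag : ∀ i, A i i = 0)
    (Lt : Matrix (Fin m) (Fin m) ℝ)
    (hLt : ∀ i j, Lt i j = (if i = j then ∑ k, A i k else 0) - A i j)
    (hconn : ∀ i j : Fin m, Relation.ReflTransGen (fun u v => 0 < A v u) i j)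
    (ξ : Fin m → ℝ) (hξpos : ∀ i, 0 < ξ i)
    (hξL : ∀ j, ∑ i, ξ i * Lt i j = 0)
    (D : Matrix (Fin m) (Fin m) ℝ)
    (hD_diag : ∀ i j, i ≠ j → D i j = 0)
    (hD_nonneg : ∀ i, 0 ≤ D i i)
    (hD_pos : ∃ i, 0 < D i i) :
    ((1 / 2 : ℝ) • (Matrix.diagonal ξ * (Lt + D) +
        (Matrix.diagonal ξ * (Lt + D))ᵀ)).PosDef ∧
    ∀ y : Fin m → ℝ, y ≠ 0 →
      0 < y ⬝ᵥ (Matrix.diagonal ξ * (Lt + D)).mulVec y := by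
  have hrow : ∀ j, ∑ i, ξ i * A i j = ξ j * ∑ k, A j k := by
    intro j
    have h := hξL j
    simp only [hLt, mul_sub, Finset.sum_sub_distrib, mul_ite, mul_zero, Finset.sum_ite_eq',
      Finset.mem_univ, if_true] at h
    linarith
  have hexp : ∀ y : Fin m → ℝ, y ⬝ᵥ (Matrix.diagonal ξ * (Lt + D)).mulVec y =
      (∑ i, ∑ j, ξ i * A i j * (y i - y j) ^ 2) / 2 + ∑ i, ξ i * D i i * y i ^ 2 := by
    intro y
    have h1 : ∑ i, ∑ j, ξ i * A i j * y j ^ 2 = ∑ i, ∑ j, ξ i * A i j * y i ^ 2 := by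
      rw [Finset.sum_comm]
      refine Finset.sum_congr rfl fun j _ => ?_
      rw [← Finset.sum_mul, hrow, ← Finset.sum_mul, ← Finset.mul_sum]
    have h2 : ∑ i, ∑ j, ξ i * A i j * (y i - y j) ^ 2 =
        ∑ i, ∑ j, ξ i * A i j * y i ^ 2 + ∑ i, ∑ j, ξ i * A i j * y j ^ 2
          - 2 * ∑ i, ∑ j, ξ i * A i j * (y i * y j) := by
      simp only [Finset.mul_sum, ← Finset.sum_add_distrib, ← Finset.sum_sub_distrib]
      refine Finset.sum_congr rfl fun i _ => Finset.sum_congr rfl fun j _ => ?_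
      ring
    have h3 : y ⬝ᵥ (Matrix.diagonal ξ * (Lt + D)).mulVec y =
        ∑ i, ∑ j, ξ i * A i j * y i ^ 2 - ∑ i, ∑ j, ξ i * A i j * (y i * y j)
          + ∑ i, ξ i * D i i * y i ^ 2 := by
      rw [← Finset.sum_sub_distrib, ← Finset.sum_add_distrib]
      simp only [dotProduct, Matrix.mulVec, Matrix.diagonal_mul, Matrix.add_apply]
      refine Finset.sum_congr rfl fun i _ => ?_
      have hD : ∑ j, D i j * y j = D i i * y i := by
        refine Finset.sum_eq_single i (fun j _ hj => ?_) (by simp)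
        rw [hD_diag i j hj.symm, zero_mul]
      have hL : ∑ j, Lt i j * y j = (∑ k, A i k) * y i - ∑ j, A i j * y j := by
        simp [hLt, sub_mul, Finset.sum_sub_distrib, ite_mul]
      have e1 : ∑ j, ξ i * (Lt i j + D i j) * y j =
          ξ i * (∑ j, Lt i j * y j + ∑ j, D i j * y j) := by
        rw [← Finset.sum_add_distrib, Finset.mul_sum]
        exact Finset.sum_congr rfl fun j _ => by ring
      have e2 : ∑ j, ξ i * A i j * y i ^ 2 = ξ i * (∑ k, A i k) * y i ^ 2 := by
        rw [← Finset.sum_mul, ← Finset.mul_sum]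
      have e3 : ∑ j, ξ i * A i j * (y i * y j) = ξ i * y i * ∑ j, A i j * y j := by
        rw [Finset.mul_sum]
        exact Finset.sum_congr rfl fun j _ => by ring
      rw [e1, e2, e3, hD, hL]
      ring
    rw [h3, h2, h1]
    ring
  have hpos : ∀ y : Fin m → ℝ, y ≠ 0 →
      0 < y ⬝ᵥ (Matrix.diagonal ξ * (Lt + D)).mulVec y := by
    intro y hy
    rw [hexp]
    have t1 : ∀ i j, 0 ≤ ξ i * A i j * (y i - y j) ^ 2 := fun i j =>
      mul_nonneg (mul_nonneg (hξpos i).le (hA_nonneg i j)) (sq_nonneg _)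
    have t2 : ∀ i, 0 ≤ ξ i * D i i * y i ^ 2 := fun i =>
      mul_nonneg (mul_nonneg (hξpos i).le (hD_nonneg i)) (sq_nonneg _)
    have s1 : 0 ≤ ∑ i, ∑ j, ξ i * A i j * (y i - y j) ^ 2 :=
      Finset.sum_nonneg fun i _ => Finset.sum_nonneg fun j _ => t1 i j
    have s2 : 0 ≤ ∑ i, ξ i * D i i * y i ^ 2 := Finset.sum_nonneg fun i _ => t2 i
    by_contra hcon
    have z1 : ∑ i, ∑ j, ξ i * A i j * (y i - y j) ^ 2 = 0 := by linarith
    have z2 : ∑ i, ξ i * D i i * y i ^ 2 = 0 := by linarith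
    have w1 : ∀ i j, ξ i * A i j * (y i - y j) ^ 2 = 0 := by
      intro i j
      have := (Finset.sum_eq_zero_iff_of_nonneg
        (fun i _ => Finset.sum_nonneg fun j _ => t1 i j)).1 z1 i (Finset.mem_univ i)
      exact (Finset.sum_eq_zero_iff_of_nonneg (fun j _ => t1 i j)).1 this j (Finset.mem_univ j)
    have w2 : ∀ i, ξ i * D i i * y i ^ 2 = 0 := fun i =>
      (Finset.sum_eq_zero_iff_of_nonneg (fun i _ => t2 i)).1 z2 i (Finset.mem_univ i)
    obtain ⟨p, hp⟩ := hD_pos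
    have hyp : y p = 0 := by
      have := (mul_eq_zero.1 (w2 p)).resolve_left (mul_pos (hξpos p) hp).ne'
      exact pow_eq_zero_iff two_ne_zero |>.1 this
    apply hy
    funext j
    have hj : y j = 0 := by
      induction hconn p j with
      | refl => exact hyp
      | @tail u v _ huv ih =>
        have := (mul_eq_zero.1 (w1 v u)).resolve_left (mul_pos (hξpos v) huv).ne'
        have := pow_eq_zero_iff two_ne_zero |>.1 this
        linarith
    simpa using hj
  refine ⟨Matrix.PosDef.of_dotProduct_mulVec_pos ?_ ?_, hpos⟩
  · ext i j
    simp [Matrix.conjTranspose_apply]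
    ring
  · intro y hy
    have h := hpos y hy
    generalize Matrix.diagonal ξ * (Lt + D) = M at h ⊢
    have ht : y ⬝ᵥ Mᵀ.mulVec y = y ⬝ᵥ M.mulVec y := by
      rw [Matrix.mulVec_transpose, dotProduct_comm, Matrix.dotProduct_mulVec]
    rw [star_trivial, Matrix.smul_mulVec, dotProduct_smul, Matrix.add_mulVec, dotProduct_add, ht,
      smul_eq_mul]
    linarith
end

section
/- Let C > 0, c > 0, β ≥ 0, and let x : ℝ → ℝᵖ satisfy ‖x(t) − x(s)‖ ≤ C|t − s| for all t, s ≥ 0. Let (t_k)_{k≥1} be a strictly increasing sequence of nonnegative reals such that ‖x(t_{k+1}) − x(t_k)‖ ≥ c e^{−β t_{k+1}} for every k. Then t_k → ∞ as k → ∞; in particular, the sequence (t_k) cannot converge to a finite limit (no Zeno behavior). -/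
open Filter

/-- no Zeno behavior: If `x` is a `C`-Lipschitz curve on
`[0, ∞)` and `(t_k)` is a strictly increasing sequence of nonnegative times
with `‖x(t_{k+1}) − x(t_k)‖ ≥ c e^{−β t_{k+1}}` for all `k`, then `t_k → ∞`. -/
theorem no_zeno_behavior {p : ℕ} (C c β : ℝ) (hC : 0 < C) (hc : 0 < c)
    (hβ : 0 ≤ β)
    (x : ℝ → EuclideanSpace ℝ (Fin p))
    (hLip : ∀ t s : ℝ, 0 ≤ t → 0 ≤ s → ‖x t - x s‖ ≤ C * |t - s|)
    (tk : ℕ → ℝ) (htk_mono : StrictMono tk) (htk_nonneg : ∀ k, 0 ≤ tk k)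
    (hgap : ∀ k, c * Real.exp (-β * tk (k + 1)) ≤ ‖x (tk (k + 1)) - x (tk k)‖) :
    Tendsto tk atTop atTop := by
  rcases tendsto_of_monotone htk_mono.monotone with h | ⟨l, hl⟩
  · exact h
  · exfalso
    have hl1 : Tendsto (fun k => tk (k + 1)) atTop (nhds l) :=
      hl.comp (tendsto_add_atTop_nat 1)
    have h1 : Tendsto (fun k => c * Real.exp (-β * tk (k + 1))) atTop
        (nhds (c * Real.exp (-β * l))) :=
      ((Real.continuous_exp.tendsto _).comp (hl1.const_mul (-β))).const_mul c
    have h2 : Tendsto (fun k => C * |tk (k + 1) - tk k|) atTop (nhds (C * |l - l|)) :=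
      ((hl1.sub hl).abs).const_mul C
    have h3 := le_of_tendsto_of_tendsto' h1 h2 fun k =>
      (hgap k).trans (hLip _ _ (htk_nonneg _) (htk_nonneg _))
    have h4 : 0 < c * Real.exp (-β * l) := by positivity
    simp only [sub_self, abs_zero, mul_zero] at h3
    linarith
end

section
/- (Theorem 1, consensus.) Let L ∈ ℝ^{n×n} be the Laplacian matrix of a strongly connected weighted digraph, and let ξ ∈ ℝⁿ be the strictly positive vector with Σ_i ξ_i = 1 and ξᵀL = 0. Let h > 0 and let g : ℝ → ℝ be continuous, monotone nondecreasing on ℝ, strictly increasing on [−h, h], satisfy g(x) = 0 iff x = 0, and be locally Lipschitz; extend g componentwise to a map g : ℝᵖ → ℝᵖ. For each i let α_i > 0, β_i > 0 and let e_i : [0, ∞) → ℝᵖ be a measurable function with ‖e_i(t)‖² ≤ α_i e^{−β_i t} for all t ≥ 0. Let x : [0, ∞) → (Fin n → ℝᵖ) be continuous and satisfy for all i and all t ≥ 0: x_i(t) = x_i(0) − ∫_0^t Σ_{j=1}^n L_{ij} ( g(x_j(s)) + e_j(s) ) ds. Let x̄ = Σ_{i=1}^n ξ_i x_i(0) ∈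 ℝᵖ and suppose every component of x̄ satisfies |x̄_l| ≤ h, l = 1, …, p. Then consensus is achieved at the weighted average of the initial states: lim_{t→∞} x_i(t) = x̄ for every i ∈ {1, …, n}. -/
open Matrix Filter

lemma etc_chain (G g : ℝ → ℝ) (hG : ∀ u, HasDerivAt G (g u) u) (hg : Continuous g)
    (f y : ℝ → ℝ) (hf : ∀ a b, IntervalIntegrable f MeasureTheory.volume a b)
    (T M : ℝ) (hT : 0 ≤ T) (hM : ∀ s ∈ Set.Icc 0 T, |f s| ≤ M)
    (hy : ∀ t, 0 ≤ t → y t = y 0 - ∫ s in (0:ℝ)..t, f s) :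
    G (y T) - G (y 0) = ∫ s in (0:ℝ)..T, g (y s) * (- f s) := by
  have hM0 : 0 ≤ M := le_trans (abs_nonneg _) (hM 0 ⟨le_rfl, hT⟩)
  set w : ℝ → ℝ := fun t => y 0 - ∫ s in (0:ℝ)..t, f s with hw
  have hyw : ∀ t, 0 ≤ t → y t = w t := hy
  have hwl : LipschitzOnWith (Real.toNNReal M) w (Set.uIcc 0 T) := by
    rw [Set.uIcc_of_le hT]
    apply LipschitzOnWith.of_dist_le_mul
    intro s hs t ht
    rw [Real.coe_toNNReal _ hM0, Real.dist_eq, Real.dist_eq]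
    have h1 : w s - w t = ∫ u in s..t, f u := by
      simp only [hw]
      rw [← intervalIntegral.integral_interval_sub_left (hf 0 t) (hf 0 s)]; ring
    rw [h1, abs_sub_comm]
    rw [← Real.norm_eq_abs]
    refine intervalIntegral.norm_integral_le_of_norm_le_const (fun u hu => ?_)
    rw [Real.norm_eq_abs]
    refine hM u ?_
    have := Set.uIoc_subset_uIcc hu
    exact (Set.uIcc_subset_Icc hs ht) this
  have hwc : ContinuousOn w (Set.uIcc 0 T) := hwl.continuousOn
  obtain ⟨R, hR⟩ := isCompact_uIcc.exists_bound_of_continuousOn hwc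
  obtain ⟨C, hC⟩ := (isCompact_Icc (a := -R) (b := R)).exists_bound_of_continuousOn hg.continuousOn
  have hGl : LipschitzOnWith (Real.toNNReal C) G (Set.Icc (-R) R) := by
    apply Convex.lipschitzOnWith_of_nnnorm_hasDerivWithin_le (convex_Icc _ _)
      (f' := g) (fun u _ => (hG u).hasDerivWithinAt)
    intro u hu
    rw [← NNReal.coe_le_coe, coe_nnnorm]
    exact (hC u hu).trans (Real.le_coe_toNNReal _)
  have hGw : LipschitzOnWith (Real.toNNReal C * Real.toNNReal M) (G ∘ w) (Set.uIcc 0 T) :=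
    hGl.comp hwl (fun t ht => abs_le.mp (hR t ht))
  have hac := hGw.absolutelyContinuousOnInterval.integral_deriv_eq_sub
  have e1 : G (y T) - G (y 0) = (G ∘ w) T - (G ∘ w) 0 := by
    simp [hyw T hT, ← hyw 0 le_rfl]
  rw [e1, ← hac]
  apply intervalIntegral.integral_congr_ae
  filter_upwards [(hf 0 T).ae_hasDerivAt_integral] with s hs hs'
  have hs2 : s ∈ Set.uIcc 0 T := Set.uIoc_subset_uIcc hs'
  have hd : HasDerivAt w (- f s) s := by
    have := (hs hs2 0 Set.left_mem_uIcc).const_sub (y 0)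
    exact this
  have hs3 : 0 ≤ s := by rw [Set.uIcc_of_le hT] at hs2; exact hs2.1
  rw [hyw s hs3]
  exact ((hG (w s)).comp s hd).deriv

lemma etc_barbalat (F : ℝ → ℝ) (hF : UniformContinuous F) (h0 : ∀ t, 0 ≤ F t) (C : ℝ)
    (hC : ∀ t, 0 ≤ t → ∫ s in (0:ℝ)..t, F s ≤ C) : Tendsto F atTop (nhds 0) := by
  have hi : ∀ a b, IntervalIntegrable F MeasureTheory.volume a b :=
    fun a b => hF.continuous.intervalIntegrable a b
  set I : ℝ → ℝ := fun t => ∫ s in (0:ℝ)..t, F s with hI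
  have hsub : ∀ a b, I b - I a = ∫ s in a..b, F s := fun a b =>
    intervalIntegral.integral_interval_sub_left (hi 0 b) (hi 0 a)
  have hmono : Monotone I := by
    intro a b hab
    have := intervalIntegral.integral_nonneg (μ := MeasureTheory.volume) hab (fun u _ => h0 u)
    rw [← hsub] at this; linarith
  have hbdd : BddAbove (Set.range I) := by
    refine ⟨C, ?_⟩
    rintro _ ⟨t, rfl⟩
    exact (hmono (le_max_left t 0)).trans (hC _ (le_max_right _ _))
  have hlim := tendsto_atTop_ciSup hmono hbdd
  rw [Metric.tendsto_atTop]
  intro ε hε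
  obtain ⟨δ, hδ, hFδ⟩ := Metric.uniformContinuous_iff.mp hF (ε/2) (by linarith)
  have hlim2 : Tendsto (fun t => I (t + δ/2) - I t) atTop (nhds 0) := by
    have := (hlim.comp (tendsto_atTop_add_const_right atTop (δ/2) tendsto_id)).sub hlim
    simpa using this
  obtain ⟨N, hN⟩ := Metric.tendsto_atTop.mp hlim2 (ε/2*(δ/2)) (by positivity)
  refine ⟨N, fun t ht => ?_⟩
  have h1 := hN t ht
  rw [Real.dist_eq, sub_zero] at h1 ⊢
  have h1 := (le_abs_self _).trans_lt h1
  rw [hsub] at h1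
  have h2 : ∫ s in t..(t+δ/2), (F t - ε/2) ≤ ∫ s in t..(t+δ/2), F s := by
    apply intervalIntegral.integral_mono_on (by linarith) (by simp) (hi _ _)
    intro s hs
    have := hFδ (a := s) (b := t) (by rw [Real.dist_eq, abs_lt]; constructor <;> linarith [hs.1, hs.2])
    rw [Real.dist_eq, abs_lt] at this
    linarith
  rw [intervalIntegral.integral_const, smul_eq_mul] at h2
  rw [abs_of_nonneg (h0 t)]
  have h3 : (δ/2) * (F t - ε/2) < (δ/2) * (ε/2) := by
    have : t + δ/2 - t = δ/2 := by ring
    rw [this] at h2; linarith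
  have := lt_of_mul_lt_mul_left h3 (by linarith)
  linarith

lemma etc_exp_int (α β : ℝ) (hα : 0 < α) (hβ : 0 < β) (t : ℝ) :
    ∫ s in (0:ℝ)..t, α * Real.exp (-β * s) ≤ α / β := by
  have : ∀ s ∈ Set.uIcc 0 t, HasDerivAt (fun s => -(α/β) * Real.exp (-β * s))
      (α * Real.exp (-β * s)) s := by
    intro s _
    have h1 := (((hasDerivAt_id s).const_mul (-β)).exp).const_mul (-(α/β))
    convert! h1 using 1
    simp only [id]; field_simp
  rw [intervalIntegral.integral_eq_sub_of_hasDerivAt this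
    (Continuous.intervalIntegrable (by fun_prop) _ _)]
  have : 0 < α/β * Real.exp (-β * t) := by positivity
  rw [mul_zero, Real.exp_zero]; linarith

lemma etc_G (g : ℝ → ℝ) (hg : Continuous g) (hm : Monotone g) (a b : ℝ) :
    g a * (b - a) ≤ (∫ s in (0:ℝ)..b, g s) - ∫ s in (0:ℝ)..a, g s := by
  have hi : ∀ a b, IntervalIntegrable g MeasureTheory.volume a b :=
    fun a b => hg.intervalIntegrable a b
  rw [intervalIntegral.integral_interval_sub_left (hi 0 b) (hi 0 a)]
  rcases le_total a b with hab | hab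
  · have : ∫ s in a..b, g a ≤ ∫ s in a..b, g s :=
      intervalIntegral.integral_mono_on hab (by simp) (hi _ _) (fun s hs => hm hs.1)
    simp at this; linarith
  · have : ∫ s in b..a, g s ≤ ∫ s in b..a, g a :=
      intervalIntegral.integral_mono_on hab (hi _ _) (by simp) (fun s hs => hm hs.2)
    rw [intervalIntegral.integral_symm]
    simp at this; linarith

/-- The key algebraic identity. -/
lemma etc_alg {n : ℕ} (A L : Matrix (Fin n) (Fin n) ℝ) (hA : ∀ i j, 0 ≤ A i j)
    (hL : ∀ i j, L i j = (if i = j then ∑ k, A i k else 0) - A i j)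
    (ξ : Fin n → ℝ) (hξ : ∀ i, 0 < ξ i) (hξL : ∀ j, ∑ i, ξ i * L i j = 0)
    (a e : Fin n → ℝ) :
    (1/4) * (∑ i, ∑ j, ξ i * A i j * (a j - a i)^2) - ∑ i, ∑ j, ξ i * A i j * (e j)^2 ≤
      ∑ i, ξ i * (a i * ∑ j, L i j * (a j + e j)) := by
  have hbal : ∀ c : Fin n → ℝ, ∑ i, ∑ j, ξ i * A i j * c j = ∑ i, ∑ j, ξ i * A i j * c i := by
    intro c
    rw [Finset.sum_comm]
    apply Finset.sum_congr rfl
    intro j _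
    have h1 := hξL j
    simp only [hL, mul_sub, Finset.sum_sub_distrib, mul_ite, mul_zero] at h1
    simp at h1
    rw [← Finset.sum_mul, ← Finset.sum_mul, ← Finset.mul_sum]
    congr 1; linarith
  have h2 : ∀ i, ∑ j, L i j * (a j + e j) = ∑ j, A i j * ((a i + e i) - (a j + e j)) := by
    intro i
    simp only [hL, sub_mul, Finset.sum_sub_distrib, ite_mul, zero_mul, mul_sub]
    simp [Finset.sum_mul]
  have h3 : ∑ i, ξ i * (a i * ∑ j, L i j * (a j + e j)) =
      ∑ i, ∑ j, ξ i * A i j * ((a i * (a i + e i)) - a i * (a j + e j)) := by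
    apply Finset.sum_congr rfl; intro i _
    rw [h2, Finset.mul_sum, Finset.mul_sum]
    apply Finset.sum_congr rfl; intro j _
    ring
  have h4 := hbal (fun i => a i * e i + (a i)^2/2)
  have h5 : ∑ i, ∑ j, ξ i * A i j * ((a i * (a i + e i)) - a i * (a j + e j)) =
      ∑ i, ∑ j, ξ i * A i j * ((1/2) * (a j - a i)^2 + (a j - a i) * e j) := by
    rw [← sub_eq_zero] at h4 ⊢
    rw [← neg_eq_zero, ← h4]
    simp only [← Finset.sum_sub_distrib, ← Finset.sum_neg_distrib]
    apply Finset.sum_congr rfl; intro i _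
    apply Finset.sum_congr rfl; intro j _
    ring
  rw [h3, h5, Finset.mul_sum, ← Finset.sum_sub_distrib]
  apply Finset.sum_le_sum; intro i _
  rw [Finset.mul_sum, ← Finset.sum_sub_distrib]
  apply Finset.sum_le_sum; intro j _
  have : 0 ≤ ξ i * A i j := mul_nonneg (hξ i).le (hA i j)
  nlinarith [mul_nonneg this (sq_nonneg ((a j - a i)/2 + e j))]

/-- Zero dissipation and the right average force consensus. -/
lemma etc_unique {n : ℕ} (A : Matrix (Fin n) (Fin n) ℝ) (hA : ∀ i j, 0 ≤ A i j)
    (hconn : ∀ i j : Fin n, Relation.ReflTransGen (fun u v => 0 < A v u) i j)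
    (ξ : Fin n → ℝ) (hξ : ∀ i, 0 < ξ i) (hξsum : ∑ i, ξ i = 1)
    (h : ℝ) (hh : 0 < h) (g : ℝ → ℝ) (hm : Monotone g) (hs : StrictMonoOn g (Set.Icc (-h) h))
    (z : Fin n → ℝ) (m : ℝ) (hmh : |m| ≤ h) (hz : ∑ i, ξ i * z i = m)
    (hD : ∑ i, ∑ j, ξ i * A i j * (g (z j) - g (z i))^2 = 0) : ∀ i, z i = m := by
  have hnn : ∀ i j, 0 ≤ ξ i * A i j * (g (z j) - g (z i))^2 := fun i j =>
    mul_nonneg (mul_nonneg (hξ i).le (hA i j)) (sq_nonneg _)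
  have h1 : ∀ i j, ξ i * A i j * (g (z j) - g (z i))^2 = 0 := by
    intro i j
    have := (Finset.sum_eq_zero_iff_of_nonneg
      (fun i _ => Finset.sum_nonneg (fun j _ => hnn i j))).mp hD i (Finset.mem_univ _)
    exact (Finset.sum_eq_zero_iff_of_nonneg (fun j _ => hnn i j)).mp this j (Finset.mem_univ _)
  have h2 : ∀ i j, g (z i) = g (z j) := by
    intro i j
    induction hconn i j with
    | refl => rfl
    | tail _ hb ih =>
      rename_i b c _
      rw [ih]
      have := h1 c b
      have hp : ξ c * A c b ≠ 0 := (mul_pos (hξ c) hb).ne'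
      have := pow_eq_zero_iff (two_ne_zero) |>.mp ((mul_eq_zero.mp this).resolve_left hp)
      linarith
  have hsum : ∑ i, ξ i * (z i - m) = 0 := by
    simp only [mul_sub, Finset.sum_sub_distrib, ← Finset.sum_mul, hξsum, hz]; ring
  have hlt : ∀ i j, z i < m → m < z j → False := by
    intro i j hi hj
    obtain ⟨hm1, hm2⟩ := abs_le.mp hmh
    rcases lt_or_eq_of_le hm1 with hlt | heq
    · have a1 : g (max (z i) (-h)) < g m :=
        hs ⟨le_max_right _ _, max_le (by linarith) (by linarith)⟩ ⟨hm1, hm2⟩ (max_lt hi hlt)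
      have a2 := hm (le_max_left (z i) (-h))
      have a3 := hm hj.le
      have := h2 i j
      linarith
    · have a1 : g m < g (min (z j) h) :=
        hs ⟨hm1, hm2⟩ ⟨le_min (by linarith) (by linarith), min_le_right _ _⟩
          (lt_min hj (by linarith))
      have a2 := hm (min_le_left (z j) h)
      have a3 := hm hi.le
      have := h2 i j
      linarith
  by_cases hex : ∃ i, z i < m
  · obtain ⟨i0, hi0⟩ := hex
    have hle : ∀ j, z j ≤ m := fun j => not_lt.mp (fun hj => hlt i0 j hi0 hj)
    exact fun i => by
      have := (Finset.sum_eq_zero_iff_of_nonpos (fun i _ =>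
        mul_nonpos_of_nonneg_of_nonpos (hξ i).le (by linarith [hle i]))).mp hsum i (Finset.mem_univ _)
      have := (mul_eq_zero.mp this).resolve_left (hξ i).ne'
      linarith
  · push Not at hex
    exact fun i => by
      have := (Finset.sum_eq_zero_iff_of_nonneg (fun i _ =>
        mul_nonneg (hξ i).le (by linarith [hex i]))).mp hsum i (Finset.mem_univ _)
      have := (mul_eq_zero.mp this).resolve_left (hξ i).ne'
      linarith

lemma etc_cluster {F : Filter ℝ} {u : ℝ → ℝ} {a b : ℝ} (h1 : MapClusterPt a F u)
    (h2 : Tendsto u F (nhds b)) : a = b := by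
  have : (nhds a ⊓ nhds b).NeBot := NeBot.mono h1 (inf_le_inf_left _ h2)
  exact eq_of_nhds_neBot this

lemma etc_scalar {n : ℕ} (A L : Matrix (Fin n) (Fin n) ℝ) (hA : ∀ i j, 0 ≤ A i j)
    (hconn : ∀ i j : Fin n, Relation.ReflTransGen (fun u v => 0 < A v u) i j)
    (hL : ∀ i j, L i j = (if i = j then ∑ k, A i k else 0) - A i j)
    (ξ : Fin n → ℝ) (hξ : ∀ i, 0 < ξ i) (hξsum : ∑ i, ξ i = 1)
    (hξL : ∀ j, ∑ i, ξ i * L i j = 0)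
    (h : ℝ) (hh : 0 < h) (g : ℝ → ℝ) (hgc : Continuous g) (hm : Monotone g)
    (hs : StrictMonoOn g (Set.Icc (-h) h)) (hg0 : ∀ x, g x = 0 ↔ x = 0)
    (α β : Fin n → ℝ) (hα : ∀ i, 0 < α i) (hβ : ∀ i, 0 < β i)
    (e : Fin n → ℝ → ℝ) (he_meas : ∀ i, Measurable (e i))
    (he : ∀ i t, 0 ≤ t → (e i t)^2 ≤ α i * Real.exp (-β i * t))
    (he' : ∀ i t, (e i t)^2 ≤ α i)
    (y : Fin n → ℝ → ℝ) (hyc : ∀ i, Continuous (y i)) (hyneg : ∀ i t, y i t = y i (max t 0))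
    (hy : ∀ i t, 0 ≤ t → y i t = y i 0 - ∫ s in (0:ℝ)..t, ∑ j, L i j * (g (y j s) + e j s))
    (m : ℝ) (hmh : |m| ≤ h) (hmy : ∑ i, ξ i * y i 0 = m) :
    ∀ i, Tendsto (y i) atTop (nhds m) := by
  set f : Fin n → ℝ → ℝ := fun i s => ∑ j, L i j * (g (y j s) + e j s) with hf
  have heb : ∀ i t, |e i t| ≤ α i + 1 := by
    intro i t
    apply abs_le_of_sq_le_sq _ (by linarith [hα i])
    nlinarith [he' i t, hα i]
  have hei : ∀ i a b, IntervalIntegrable (e i) MeasureTheory.volume a b := by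
    intro i a b
    apply (intervalIntegrable_const (c := α i + 1)).mono_fun (he_meas i).aestronglyMeasurable
    refine Eventually.of_forall fun t => ?_
    exact (heb i t).trans (le_abs_self _)
  have he2i : ∀ i a b, IntervalIntegrable (fun t => (e i t)^2) MeasureTheory.volume a b := by
    intro i a b
    apply (intervalIntegrable_const (c := α i)).mono_fun ((he_meas i).pow_const 2).aestronglyMeasurable
    refine Eventually.of_forall fun t => ?_
    simp only [Real.norm_eq_abs, abs_pow, sq_abs]
    exact (he' i t).trans (le_abs_self _)
  have hui : ∀ j a b, IntervalIntegrable (fun s => g (y j s) + e j s) MeasureTheory.volume a b :=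
    fun j a b => ((hgc.comp (hyc j)).intervalIntegrable a b).add (hei j a b)
  have hfi : ∀ i a b, IntervalIntegrable (f i) MeasureTheory.volume a b := by
    intro i a b
    have := IntervalIntegrable.sum (μ := MeasureTheory.volume) (a := a) (b := b) Finset.univ
      (f := fun j s => L i j * (g (y j s) + e j s)) (fun j _ => (hui j a b).const_mul _)
    convert! this using 1
    ext s; simp [hf]
  -- bound of f given bounds of g
  have hfb : ∀ (B : ℝ) (s : ℝ), (∀ j, |g (y j s)| ≤ B) → ∀ i,
      |f i s| ≤ ∑ i, ∑ j, |L i j| * (B + (α j + 1)) := by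
    intro B s hB i
    have h1 : ∀ i, |f i s| ≤ ∑ j, |L i j| * (B + (α j + 1)) := by
      intro i
      refine (Finset.abs_sum_le_sum_abs _ _).trans (Finset.sum_le_sum fun j _ => ?_)
      rw [abs_mul]
      exact mul_le_mul_of_nonneg_left ((abs_add_le _ _).trans (add_le_add (hB j) (heb j s)))
        (abs_nonneg _)
    exact (h1 i).trans (Finset.single_le_sum (f := fun i => ∑ j, |L i j| * (B + (α j + 1)))
      (fun i _ => (abs_nonneg _).trans (h1 i)) (Finset.mem_univ i))
  set G : ℝ → ℝ := fun u => ∫ s in (0:ℝ)..u, g s with hG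
  have hGd : ∀ u, HasDerivAt G (g u) u := fun u =>
    intervalIntegral.integral_hasDerivAt_right (hgc.intervalIntegrable _ _)
      (hgc.stronglyMeasurableAtFilter _ _) hgc.continuousAt
  have hchain : ∀ i T, 0 ≤ T →
      G (y i T) - G (y i 0) = ∫ s in (0:ℝ)..T, g (y i s) * (- f i s) := by
    intro i T hT
    have hb : ∀ j, ∃ C, ∀ s ∈ Set.Icc 0 T, ‖g (y j s)‖ ≤ C := fun j =>
      isCompact_Icc.exists_bound_of_continuousOn (hgc.comp (hyc j)).continuousOn
    choose C hC using hb
    refine etc_chain G g hGd hgc (f i) (y i) (hfi i) T _ hT (fun s hs =>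
      hfb (∑ j, |C j|) s (fun j => ?_) i) (hy i)
    exact ((hC j s hs).trans (le_abs_self _)).trans
      (Finset.single_le_sum (f := fun j => |C j|) (fun j _ => abs_nonneg _) (Finset.mem_univ j))
  set D : (Fin n → ℝ) → ℝ := fun z => ∑ i, ∑ j, ξ i * A i j * (g (z j) - g (z i))^2 with hD
  have hDc : Continuous D := by
    simp only [hD]; fun_prop
  have hD0 : ∀ z, 0 ≤ D z := fun z => Finset.sum_nonneg fun i _ => Finset.sum_nonneg fun j _ =>
    mul_nonneg (mul_nonneg (hξ i).le (hA i j)) (sq_nonneg _)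
  set Y : ℝ → Fin n → ℝ := fun t i => y i t with hY
  have hYc : Continuous Y := continuous_pi hyc
  set K : ℝ := ∑ i, ∑ j, ξ i * A i j * (α j / β j) with hK
  set V : ℝ → ℝ := fun t => ∑ i, ξ i * G (y i t) with hV
  have hmain : ∀ T, 0 ≤ T → V T + (1/4) * ∫ s in (0:ℝ)..T, D (Y s) ≤ V 0 + K := by
    intro T hT
    have hgfi : ∀ i, IntervalIntegrable (fun s => ξ i * (g (y i s) * f i s))
        MeasureTheory.volume 0 T := fun i =>
      ((hfi i 0 T).continuousOn_mul (hgc.comp (hyc i)).continuousOn).const_mul _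
    have h1 : V T - V 0 = - ∫ s in (0:ℝ)..T, ∑ i, ξ i * (g (y i s) * f i s) := by
      rw [intervalIntegral.integral_finsetSum (fun i _ => hgfi i)]
      simp only [hV]
      rw [← Finset.sum_sub_distrib, ← Finset.sum_neg_distrib]
      apply Finset.sum_congr rfl; intro i _
      rw [← mul_sub, hchain i T hT, intervalIntegral.integral_const_mul]
      simp
    have hqi : ∀ i j, IntervalIntegrable (fun s => ξ i * A i j * (e j s)^2)
        MeasureTheory.volume 0 T := fun i j => (he2i j 0 T).const_mul _
    have hqi2 : ∀ i, IntervalIntegrable (fun s => ∑ j, ξ i * A i j * (e j s)^2)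
        MeasureTheory.volume 0 T := by
      intro i
      convert! IntervalIntegrable.sum Finset.univ (fun j _ => hqi i j) using 1
      ext s; simp
    have hqi3 : IntervalIntegrable (fun s => ∑ i, ∑ j, ξ i * A i j * (e j s)^2)
        MeasureTheory.volume 0 T := by
      convert! IntervalIntegrable.sum Finset.univ (fun i _ => hqi2 i) using 1
      ext s; simp
    have hsi : IntervalIntegrable (fun s => ∑ i, ξ i * (g (y i s) * f i s))
        MeasureTheory.volume 0 T := by
      convert! IntervalIntegrable.sum Finset.univ (fun i _ => hgfi i) using 1
      ext s; simp
    have hDi : IntervalIntegrable (fun s => (1/4) * D (Y s)) MeasureTheory.volume 0 T :=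
      (continuous_const.mul (hDc.comp hYc)).intervalIntegrable _ _
    have h2 : ∫ s in (0:ℝ)..T, ((1/4) * D (Y s) - ∑ i, ∑ j, ξ i * A i j * (e j s)^2) ≤
        ∫ s in (0:ℝ)..T, ∑ i, ξ i * (g (y i s) * f i s) := by
      apply intervalIntegral.integral_mono_on hT (hDi.sub hqi3) hsi
      intro s _
      exact etc_alg A L hA hL ξ hξ hξL (fun i => g (y i s)) (fun i => e i s)
    rw [intervalIntegral.integral_sub hDi hqi3, intervalIntegral.integral_const_mul] at h2
    have h3 : ∫ s in (0:ℝ)..T, ∑ i, ∑ j, ξ i * A i j * (e j s)^2 ≤ K := by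
      rw [intervalIntegral.integral_finsetSum (fun i _ => hqi2 i)]
      apply Finset.sum_le_sum; intro i _
      rw [intervalIntegral.integral_finsetSum (fun j _ => hqi i j)]
      apply Finset.sum_le_sum; intro j _
      rw [intervalIntegral.integral_const_mul]
      apply mul_le_mul_of_nonneg_left _ (mul_nonneg (hξ i).le (hA i j))
      refine le_trans ?_ (etc_exp_int (α j) (β j) (hα j) (hβ j) T)
      apply intervalIntegral.integral_mono_on hT (he2i j 0 T)
        (Continuous.intervalIntegrable (by fun_prop) _ _)
      intro s hs
      exact he j s hs.1
    linarith
  -- G is nonnegative and coercive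
  have hGsub : ∀ a b, g a * (b - a) ≤ G b - G a := fun a b => etc_G g hgc hm a b
  have hG00 : G 0 = 0 := by simp [hG]
  have hg00 : g 0 = 0 := (hg0 0).mpr rfl
  have hGnn : ∀ u, 0 ≤ G u := by
    intro u; have := hGsub 0 u; rw [hG00, hg00] at this; linarith
  have hg1 : 0 < g 1 := lt_of_le_of_ne (hg00 ▸ hm zero_le_one)
    (fun hc => one_ne_zero ((hg0 1).mp hc.symm))
  have hgm1 : g (-1) < 0 := lt_of_le_of_ne (hg00 ▸ hm (by norm_num))
    (fun hc => by have := (hg0 (-1)).mp hc; norm_num at this)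
  have hDint : ∀ T, 0 ≤ T → 0 ≤ ∫ s in (0:ℝ)..T, D (Y s) := fun T hT =>
    intervalIntegral.integral_nonneg hT (fun s _ => hD0 _)
  have hVnn : ∀ t, 0 ≤ V t := fun t => Finset.sum_nonneg fun i _ =>
    mul_nonneg (hξ i).le (hGnn _)
  set C0 : ℝ := V 0 + K with hC0
  have hVle : ∀ t, 0 ≤ t → V t ≤ C0 := fun t ht => by
    have := hmain t ht; have := hDint t ht; linarith
  have hbd : ∀ i, ∃ R, ∀ t, 0 ≤ t → |y i t| ≤ R := by
    intro i
    have hGle : ∀ t, 0 ≤ t → G (y i t) ≤ C0 / ξ i := by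
      intro t ht
      rw [le_div_iff₀ (hξ i), mul_comm]
      exact (Finset.single_le_sum (f := fun i => ξ i * G (y i t))
        (fun i _ => mul_nonneg (hξ i).le (hGnn _)) (Finset.mem_univ i)).trans (hVle t ht)
    refine ⟨max (1 + C0 / ξ i / g 1) (1 + C0 / ξ i / (- g (-1))), fun t ht => ?_⟩
    rw [abs_le']
    constructor
    · refine le_trans ?_ (le_max_left _ _)
      have h1 := hGsub 1 (y i t)
      have : y i t - 1 ≤ C0 / ξ i / g 1 := by
        rw [le_div_iff₀ hg1]
        linarith [hGle t ht, hGnn 1]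
      linarith
    · refine le_trans ?_ (le_max_right _ _)
      have h1 := hGsub (-1) (y i t)
      have : - y i t - 1 ≤ C0 / ξ i / (- g (-1)) := by
        rw [le_div_iff₀ (by linarith)]
        linarith [hGle t ht, hGnn (-1)]
      linarith
  choose R hR using hbd
  have hRy : ∀ i t, y i t ∈ Set.Icc (-R i) (R i) := by
    intro i t
    rw [hyneg]
    exact abs_le.mp (hR i _ (le_max_right _ _))
  set S : Set (Fin n → ℝ) := Set.univ.pi fun i => Set.Icc (-R i) (R i) with hS
  have hSc : IsCompact S := isCompact_univ_pi fun i => isCompact_Icc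
  have hYS : ∀ t, Y t ∈ S := fun t i _ => hRy i t
  -- Lipschitz
  have hgb : ∀ j, ∃ C, ∀ u ∈ Set.Icc (-R j) (R j), ‖g u‖ ≤ C := fun j =>
      isCompact_Icc.exists_bound_of_continuousOn hgc.continuousOn
  choose C hC using hgb
  have hfM : ∃ M, ∀ i s, |f i s| ≤ M := by
    refine ⟨_, fun i s => hfb (∑ j, |C j|) s (fun j => ?_) i⟩
    exact ((hC j _ (hRy j s)).trans (le_abs_self _)).trans
      (Finset.single_le_sum (f := fun j => |C j|) (fun j _ => abs_nonneg _) (Finset.mem_univ j))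
  obtain ⟨M, hM⟩ := hfM
  have hylip : ∀ i, LipschitzWith (Real.toNNReal M) (y i) := by
    intro i
    have hM0 : 0 ≤ M := (abs_nonneg _).trans (hM i 0)
    apply LipschitzWith.of_dist_le_mul
    intro s t
    rw [Real.coe_toNNReal _ hM0, Real.dist_eq, Real.dist_eq, hyneg i s, hyneg i t]
    rw [hy i _ (le_max_right s 0), hy i _ (le_max_right t 0)]
    have h1 : (y i 0 - ∫ s in (0:ℝ)..(max s 0), f i s) - (y i 0 - ∫ s in (0:ℝ)..(max t 0), f i s)
        = ∫ u in (max s 0)..(max t 0), f i u := by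
      rw [← intervalIntegral.integral_interval_sub_left (hfi i 0 (max t 0)) (hfi i 0 (max s 0))]
      ring
    rw [h1, ← Real.norm_eq_abs]
    refine (intervalIntegral.norm_integral_le_of_norm_le_const (fun u _ => hM i u)).trans ?_
    rw [abs_sub_comm]
    exact mul_le_mul_of_nonneg_left (abs_max_sub_max_le_abs _ _ _) hM0
  have hYu : UniformContinuous Y := uniformContinuous_pi.mpr fun i => (hylip i).uniformContinuous
  have hDu : UniformContinuous (fun t => D (Y t)) := by
    have h1 := hSc.uniformContinuousOn_of_continuous hDc.continuousOn
    rw [Metric.uniformContinuousOn_iff] at h1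
    rw [Metric.uniformContinuous_iff] at hYu ⊢
    intro ε hε
    obtain ⟨δ, hδ, h2⟩ := h1 ε hε
    obtain ⟨δ', hδ', h3⟩ := hYu δ hδ
    exact ⟨δ', hδ', by
      intro a b hab
      exact h2 _ (hYS _) _ (hYS _) (h3 hab)⟩
  have hDlim : Tendsto (fun t => D (Y t)) atTop (nhds 0) := by
    refine etc_barbalat _ hDu (fun t => hD0 _) (4 * C0) (fun t ht => ?_)
    have := hmain t ht; have := hVnn t; linarith
  -- conserved average
  have hcons : ∀ t, ∑ i, ξ i * y i t = m := by
    have h0 : ∀ t, 0 ≤ t → ∑ i, ξ i * y i t = m := by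
      intro t ht
      have h1 : ∑ i, ξ i * ∫ s in (0:ℝ)..t, f i s = 0 := by
        simp only [← intervalIntegral.integral_const_mul]
        rw [← intervalIntegral.integral_finsetSum (fun i _ => (hfi i 0 t).const_mul _)]
        have : ∀ s, ∑ i, ξ i * f i s = 0 := by
          intro s
          simp only [hf, Finset.mul_sum]
          rw [Finset.sum_comm]
          apply Finset.sum_eq_zero; intro j _
          simp only [← mul_assoc]
          rw [← Finset.sum_mul, hξL, zero_mul]
        simp [this]
      have h2 : ∀ i, ξ i * y i t = ξ i * y i 0 - ξ i * ∫ s in (0:ℝ)..t, f i s := by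
        intro i
        rw [hy i t ht, mul_sub]
      rw [Finset.sum_congr rfl (fun i _ => h2 i), Finset.sum_sub_distrib, h1, hmy, sub_zero]
    intro t
    have := h0 _ (le_max_right t 0)
    rw [← this]
    exact Finset.sum_congr rfl fun i _ => by rw [← hyneg]
  have hfin : Tendsto Y atTop (nhds (fun _ => m)) := by
    apply hSc.tendsto_nhds_of_unique_mapClusterPt (Eventually.of_forall hYS)
    intro z _ hz
    have hz1 : D z = 0 := by
      have h1 : MapClusterPt (D z) atTop (D ∘ Y) := hz.continuousAt_comp hDc.continuousAt
      exact etc_cluster h1 hDlim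
    have hz2 : ∑ i, ξ i * z i = m := by
      have hc : Continuous (fun z : Fin n → ℝ => ∑ i, ξ i * z i) := by fun_prop
      have h1 := hz.continuousAt_comp hc.continuousAt
      refine etc_cluster h1 ?_
      have : (fun z : Fin n → ℝ => ∑ i, ξ i * z i) ∘ Y = fun _ => m := by
        ext t; exact hcons t
      rw [this]; exact tendsto_const_nhds
    funext i
    exact etc_unique A hA hconn ξ hξ hξsum h hh g hm hs z m hmh hz2 hz1 i
  exact fun i => tendsto_pi_nhds.mp hfin i

theorem event_triggered_consensus_strongly_connected {n p : ℕ}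
    (A : Matrix (Fin n) (Fin n) ℝ)
    (hA_nonneg : ∀ i j, 0 ≤ A i j)
    (hA_diag : ∀ i, A i i = 0)
    (hconn : ∀ i j : Fin n, Relation.ReflTransGen (fun u v => 0 < A v u) i j)
    (L : Matrix (Fin n) (Fin n) ℝ)
    (hL : ∀ i j, L i j = (if i = j then ∑ k, A i k else 0) - A i j)
    (ξ : Fin n → ℝ) (hξpos : ∀ i, 0 < ξ i) (hξsum : ∑ i, ξ i = 1)
    (hξL : ∀ j, ∑ i, ξ i * L i j = 0)
    (h : ℝ) (hh : 0 < h)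
    (g : ℝ → ℝ)
    (hg_cont : Continuous g)
    (hg_mono : Monotone g)
    (hg_strict : StrictMonoOn g (Set.Icc (-h) h))
    (hg_zero : ∀ x, g x = 0 ↔ x = 0)
    (hg_lip : LocallyLipschitz g)
    (gv : EuclideanSpace ℝ (Fin p) → EuclideanSpace ℝ (Fin p))
    (hgv : ∀ v l, gv v l = g (v l))
    (α β : Fin n → ℝ) (hα : ∀ i, 0 < α i) (hβ : ∀ i, 0 < β i)
    (e : Fin n → ℝ → EuclideanSpace ℝ (Fin p))
    (he_meas : ∀ i, Measurable (e i))
    (he_bound : ∀ i, ∀ t : ℝ, 0 ≤ t → ‖e i t‖ ^ 2 ≤ α i * Real.exp (-β i * t))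
    (x : ℝ → Fin n → EuclideanSpace ℝ (Fin p))
    (hx_cont : ∀ i, ContinuousOn (fun t => x t i) (Set.Ici (0 : ℝ)))
    (hx_eq : ∀ i, ∀ t : ℝ, 0 ≤ t →
      x t i = x 0 i - ∫ s in (0 : ℝ)..t, ∑ j, L i j • (gv (x s j) + e j s))
    (xbar : EuclideanSpace ℝ (Fin p)) (hxbar : xbar = ∑ i, ξ i • x 0 i)
    (hxbar_le : ∀ l, |xbar l| ≤ h) :
    ∀ i, Tendsto (fun t => x t i) atTop (nhds xbar) := by
  -- extension of the solution and of the error to the negative times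
  have hXc : ∀ i, Continuous (fun t : ℝ => x (max t 0) i) := fun i =>
    (hx_cont i).comp_continuous (f := fun t : ℝ => max t 0) (by fun_prop)
      (fun t => Set.mem_Ici.mpr (le_max_right _ _))
  have hEm : ∀ i, Measurable (fun t : ℝ => e i (max t 0)) := fun i =>
    (he_meas i).comp (by fun_prop)
  have hEb : ∀ i t, ‖e i (max t 0)‖ ^ 2 ≤ α i := by
    intro i t
    refine (he_bound i _ (le_max_right _ _)).trans ?_
    have : Real.exp (-β i * max t 0) ≤ 1 := by
      rw [Real.exp_le_one_iff]
      nlinarith [hβ i, le_max_right t 0]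
    nlinarith [hα i]
  have hgvc : Continuous gv := by
    have h1 : gv = fun v => WithLp.toLp 2 (fun l => g (v l)) := by
      funext v; ext l; simp [hgv]
    rw [h1]
    exact (PiLp.continuous_toLp 2 _).comp (continuous_pi fun l =>
      hg_cont.comp (EuclideanSpace.proj (𝕜 := ℝ) l).continuous)
  have hcoord : ∀ (v : EuclideanSpace ℝ (Fin p)) (l : Fin p), (v l)^2 ≤ ‖v‖^2 := by
    intro v l
    rw [EuclideanSpace.norm_sq_eq]
    have := Finset.single_le_sum (f := fun l => ‖v l‖^2) (fun i _ => sq_nonneg _)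
      (Finset.mem_univ l)
    simpa using this
  have hkey : ∀ l i, Tendsto (fun t : ℝ => x (max t 0) i l) atTop (nhds (xbar l)) := by
    intro l
    refine etc_scalar A L hA_nonneg hconn hL ξ hξpos hξsum hξL h hh g hg_cont hg_mono hg_strict
      hg_zero α β hα hβ (fun i t => e i (max t 0) l) ?_ ?_ ?_ (fun i t => x (max t 0) i l)
      ?_ ?_ ?_ (xbar l) (hxbar_le l) ?_
    · intro i
      exact (EuclideanSpace.proj (𝕜 := ℝ) l).continuous.measurable.comp (hEm i)
    · intro i t ht
      have := he_bound i t ht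
      rw [max_eq_left ht]
      exact (hcoord _ _).trans this
    · intro i t
      exact (hcoord _ _).trans (hEb i t)
    · intro i
      exact (EuclideanSpace.proj (𝕜 := ℝ) l).continuous.comp (hXc i)
    · intro i t
      simp
    · intro i t ht
      have hint : IntervalIntegrable (fun s => ∑ j, L i j • (gv (x (max s 0) j) + e j (max s 0)))
          MeasureTheory.volume 0 t := by
        have h1 : ∀ j, IntervalIntegrable
            (fun s => L i j • (gv (x (max s 0) j) + e j (max s 0))) MeasureTheory.volume 0 t := by
          intro j
          have h0 : IntervalIntegrable (fun s => gv (x (max s 0) j)) MeasureTheory.volume 0 t :=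
            (hgvc.comp (hXc j)).intervalIntegrable 0 t
          refine IntervalIntegrable.smul (r := L i j) (h0.add ?_)
          apply (intervalIntegrable_const (c := α j + 1)).mono_fun (hEm j).aestronglyMeasurable
          refine Eventually.of_forall fun t => ?_
          refine le_trans ?_ (le_abs_self _)
          apply le_of_sq_le_sq _ (by linarith [hα j])
          nlinarith [hEb j t, hα j]
        convert! IntervalIntegrable.sum Finset.univ (fun j _ => h1 j) using 1
        ext s; simp
      have h2 : ∫ s in (0 : ℝ)..t, ∑ j, L i j • (gv (x s j) + e j s) =
          ∫ s in (0 : ℝ)..t, ∑ j, L i j • (gv (x (max s 0) j) + e j (max s 0)) := by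
        apply intervalIntegral.integral_congr
        intro s hs
        rw [Set.uIcc_of_le ht] at hs
        simp only [max_eq_left hs.1]
      have h3 := hx_eq i t ht
      rw [h2] at h3
      simp only [max_eq_left ht, max_self]
      have h4 := congrArg (EuclideanSpace.proj (𝕜 := ℝ) l) h3
      rw [map_sub, ← ContinuousLinearMap.intervalIntegral_comp_comm _ hint] at h4
      simpa [hgv, mul_add] using h4
    · rw [hxbar]; simp
  intro i
  have h1 : Tendsto (fun t : ℝ => x (max t 0) i) atTop (nhds xbar) := by
    have h2 : Tendsto (fun t : ℝ => (fun l => x (max t 0) i l)) atTop (nhds (fun l => xbar l)) :=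
      tendsto_pi_nhds.mpr fun l => hkey l i
    exact ((PiLp.continuous_toLp 2 (fun _ : Fin p => ℝ)).tendsto _).comp h2
  refine h1.congr' ?_
  filter_upwards [eventually_ge_atTop 0] with t ht
  rw [max_eq_left ht]
end

section
/- (Theorem 2, consensus.) Let L ∈ ℝ^{n×n} be the Laplacian matrix of a weighted digraph that has a directed spanning tree, and let ξ ∈ ℝⁿ be a nonnegative vector with Σ_i ξ_i = 1 and ξᵀL = 0. Let h > 0 and let g : ℝ → ℝ be continuous, monotone nondecreasing on ℝ, strictly increasing on [−h, h], satisfy g(x) = 0 iff x = 0, be locally Lipschitz, and satisfy: there exists ϱ > 0 such that |g(x) − g(y)| ≥ ϱ|x − y| for all x, y ∈ [−h, h]; extend g componentwise to a map g : ℝᵖ → ℝᵖ. For each i let α_i > 0, β_i > 0 and let e_i : [0, ∞) → ℝᵖ be a measurable function with ‖e_i(t)‖² ≤ α_i e^{−β_i t} for all t ≥ 0. Let x : [0, ∞) → (Fin n → ℝᵖ) be continuous and satisfy for all i and all t ≥ 0: x_i(t) = x_i(0) − ∫_0^t Σ_{j=1}^n L_{ij} ( g(x_j(s)) + e_j(s)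 ) ds. Let ν = Σ_{i=1}^n ξ_i x_i(0) ∈ ℝᵖ and suppose every component of ν satisfies |ν_l| < h, l = 1, …, p. Then consensus is achieved: lim_{t→∞} x_i(t) = ν for every i ∈ {1, …, n}. -/
open Matrix Filter

lemma etc_decay {f f' : ℝ → ℝ} {T γ K : ℝ} (hγ : 0 < γ)
    (hf : ∀ t, HasDerivAt f (f' t) t) (hle : ∀ t, T ≤ t → f' t ≤ -γ)
    (hK : ∀ t, T ≤ t → K ≤ f t) : False := by
  have hanti : AntitoneOn (fun t => f t + γ * t) (Set.Ici T) := by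
    apply antitoneOn_of_deriv_nonpos (convex_Ici T)
    · exact fun t _ => ((hf t).add ((hasDerivAt_id t).const_mul γ)).continuousAt.continuousWithinAt
    · exact fun t _ =>
        ((hf t).add ((hasDerivAt_id t).const_mul γ)).differentiableAt.differentiableWithinAt
    · intro t ht
      rw [interior_Ici] at ht
      have := ((hf t).add ((hasDerivAt_id t).const_mul γ)).deriv
      have h2 := hle t (le_of_lt ht)
      have h3 : deriv (fun t => f t + γ * t) t = f' t + γ * 1 := this
      rw [h3]; linarith
  have h0 := hK T le_rfl
  set s := T + (f T - K + 1) / γ with hs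
  have hTs : T ≤ s := by
    have : 0 ≤ (f T - K + 1) / γ := div_nonneg (by linarith) hγ.le
    linarith
  have h1 := hanti (Set.mem_Ici.2 le_rfl) (Set.mem_Ici.2 hTs) hTs
  have h2 := hK s hTs
  have h3 : γ * s = γ * T + (f T - K + 1) := by rw [hs]; field_simp
  simp only at h1
  linarith

lemma etc_upper_bdd {n : ℕ} (r : Fin n) (A : Matrix (Fin n) (Fin n) ℝ)
    (hA : ∀ i j, 0 ≤ A i j) (g : ℝ → ℝ) (hg : Monotone g)
    (x F E : Fin n → ℝ → ℝ) (N : ℝ → ℝ) (hNc : Continuous N) (hN0 : ∀ t, 0 ≤ N t)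
    (hxc : ∀ i, Continuous (x i))
    (hx : ∀ i t, 0 ≤ t → x i t = F i t + E i t)
    (hF : ∀ i t, HasDerivAt (F i) (∑ j, A i j * (g (x j t) - g (x i t))) t)
    (hE : ∀ i s t, 0 ≤ s → s ≤ t → E i t - E i s ≤ N s - N t) :
    ∃ K, ∀ i t, 0 ≤ t → x i t ≤ K := by
  have : Nonempty (Fin n) := ⟨r⟩
  obtain ⟨i0, hi0⟩ := Finite.exists_max (fun i => x i 0)
  refine ⟨x i0 0 + N 0 + 1, fun k T hT => ?_⟩
  set ε : ℝ := 1 / (T + 1) with hε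
  have hεpos : 0 < ε := by positivity
  have hεT : ε * T ≤ 1 := by
    rw [hε, div_mul_eq_mul_div, one_mul, div_le_one (by linarith)]; linarith
  have hmax : ∀ i, ∃ t ∈ Set.Icc 0 T, IsMaxOn (fun s => x i s + N s - ε * s) (Set.Icc 0 T) t := by
    intro i
    apply isCompact_Icc.exists_isMaxOn ⟨0, le_rfl, hT⟩
    have := hxc i
    fun_prop
  choose τ hτ hτmax using hmax
  obtain ⟨i, hi⟩ := Finite.exists_max (fun i => x i (τ i) + N (τ i) - ε * τ i)
  have key : ∀ j s, 0 ≤ s → s ≤ T → x j s + N s - ε * s ≤ x i (τ i) + N (τ i) - ε * τ i :=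
    fun j s h0 h1 => le_trans (hτmax j ⟨h0, h1⟩) (hi j)
  obtain ⟨h0, h1⟩ := hτ i
  have hkT := key k T hT le_rfl
  have hNT := hN0 T
  rcases h0.eq_or_lt with h00 | hpos
  · rw [← h00] at hkT
    have := hi0 i
    linarith
  exfalso
  have hD : ∑ j, A i j * (g (x j (τ i)) - g (x i (τ i))) ≤ 0 := by
    apply Finset.sum_nonpos
    intro j _
    have := key j (τ i) h0 h1
    have h2 : g (x j (τ i)) ≤ g (x i (τ i)) := hg (by linarith)
    exact mul_nonpos_of_nonneg_of_nonpos (hA i j) (by linarith)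
  have hd : HasDerivAt (fun s => F i s - ε * s) _ (τ i) :=
    (hF i (τ i)).sub ((hasDerivAt_id (τ i)).const_mul ε)
  have hsl := hasDerivAt_iff_tendsto_slope_left_right.1 hd |>.1
  have hev : ∀ᶠ s in nhdsWithin (τ i) (Set.Iio (τ i)), slope (fun s => F i s - ε * s) (τ i) s < 0 :=
    hsl.eventually (gt_mem_nhds (by linarith))
  have hev2 : ∀ᶠ s in nhdsWithin (τ i) (Set.Iio (τ i)), 0 < s :=
    nhdsWithin_le_nhds (lt_mem_nhds hpos)
  obtain ⟨s, hs1, hs2, hs3⟩ := (hev.and (hev2.and self_mem_nhdsWithin)).exists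
  rw [slope_def_field] at hs1
  have hs3' : s < τ i := hs3
  have h5 := hE i s (τ i) hs2.le hs3'.le
  have h6 := key i s hs2.le (hs3'.le.trans h1)
  rw [hx i s hs2.le, hx i (τ i) h0] at h6
  have h7 : 0 ≤ ((F i s - ε * s) - (F i (τ i) - ε * τ i)) / (s - τ i) :=
    div_nonneg_of_nonpos (by linarith) (by linarith)
  linarith

lemma etc_upper_limit {n : ℕ} (r : Fin n) (A : Matrix (Fin n) (Fin n) ℝ)
    (hA : ∀ i j, 0 ≤ A i j)
    (htree : ∀ i, Relation.ReflTransGen (fun u v => 0 < A v u) r i)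
    (g : ℝ → ℝ) (hg : Monotone g) (hgc : Continuous g)
    (x F : Fin n → ℝ → ℝ) (K : ℝ)
    (hF : ∀ i t, HasDerivAt (F i) (∑ j, A i j * (g (x j t) - g (x i t))) t)
    (hxF : ∀ i, Tendsto (fun t => x i t - F i t) atTop (nhds 0))
    (hK : ∀ i t, 0 ≤ t → |F i t| ≤ K)
    (ν : ℝ) (hr : Tendsto (F r) atTop (nhds ν)) (hν : ∀ z, g z ≤ g ν → z ≤ ν) :
    ∀ i ε, 0 < ε → ∀ᶠ t in atTop, F i t < ν + ε := by
  have : Nonempty (Fin n) := ⟨r⟩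
  have hbu : ∀ i, IsBoundedUnder (· ≤ ·) atTop (F i) := fun i =>
    ⟨K, eventually_map.2 ((eventually_ge_atTop 0).mono fun t ht => (abs_le.1 (hK i t ht)).2)⟩
  have hbl : ∀ i, IsBoundedUnder (· ≥ ·) atTop (F i) := fun i =>
    ⟨-K, eventually_map.2 ((eventually_ge_atTop 0).mono fun t ht => (abs_le.1 (hK i t ht)).1)⟩
  set X : Fin n → ℝ := fun i => limsup (F i) atTop with hX
  have h1 : ∀ i ε, 0 < ε → ∀ᶠ t in atTop, F i t < X i + ε := fun i ε hε =>
    eventually_lt_of_limsup_lt (by simp only [hX]; linarith) (hbu i)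
  have h2 : ∀ i ε, 0 < ε → ∃ᶠ t in atTop, X i - ε < F i t := fun i ε hε =>
    frequently_lt_of_lt_limsup (hbl i).isCoboundedUnder_le (by simp only [hX]; linarith)
  have hXr : X r = ν := hr.limsup_eq
  have sub : ∀ i, 0 ≤ ∑ j, A i j * (g (X j) - g (X i)) := by
    intro i
    by_contra hneg
    push Not at hneg
    have hcont : Continuous (fun ε : ℝ => ∑ j, A i j * (g (X j + ε) - g (X i - 3 * ε))) := by
      fun_prop
    have hev : ∀ᶠ ε in nhds (0:ℝ), ∑ j, A i j * (g (X j + ε) - g (X i - 3 * ε)) < 0 :=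
      hcont.continuousAt.eventually (gt_mem_nhds (by simpa using hneg))
    have hev' : ∀ᶠ ε in nhdsWithin (0:ℝ) (Set.Ioi 0), _ := nhdsWithin_le_nhds hev
    obtain ⟨ε, hε1, hε⟩ := (hev'.and self_mem_nhdsWithin).exists
    have hε : 0 < ε := hε
    have hev3 : ∀ᶠ t in atTop, ∀ j, F j t < X j + ε / 2 :=
      eventually_all.2 fun j => h1 j _ (by linarith)
    have hev4 : ∀ᶠ t in atTop, ∀ j, |x j t - F j t| < ε / 2 :=
      eventually_all.2 fun j => by
        have := (hxF j).eventually (Metric.ball_mem_nhds (0:ℝ) (half_pos hε))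
        simpa [Real.dist_eq] using this
    obtain ⟨T, hT⟩ := eventually_atTop.1 ((hev3.and hev4).and (eventually_ge_atTop 0))
    have hder : ∀ t, T ≤ t → X i - 2 * ε ≤ F i t →
        ∑ j, A i j * (g (x j t) - g (x i t)) ≤ ∑ j, A i j * (g (X j + ε) - g (X i - 3 * ε)) := by
      intro t ht hle
      obtain ⟨⟨ha, hb⟩, -⟩ := hT t ht
      apply Finset.sum_le_sum
      intro j _
      apply mul_le_mul_of_nonneg_left _ (hA i j)
      have hj := ha j
      have hj2 := abs_lt.1 (hb j)
      have hi2 := abs_lt.1 (hb i)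
      have e1 : g (x j t) ≤ g (X j + ε) := hg (by linarith [hj2.2])
      have e2 : g (X i - 3 * ε) ≤ g (x i t) := hg (by linarith [hi2.1])
      linarith
    have hex : ∃ t1, T ≤ t1 ∧ F i t1 < X i - 2 * ε := by
      by_contra hno
      push Not at hno
      exact etc_decay (neg_pos.2 hε1) (hF i) (fun t ht => by
        rw [neg_neg]; exact hder t ht (hno t ht)) hno
    obtain ⟨t1, ht1, hF1⟩ := hex
    obtain ⟨t2, ht2, ht2'⟩ := ((h2 i ε hε).and_eventually (eventually_ge_atTop t1)).exists
    have := image_le_of_deriv_right_lt_deriv_boundary (f := F i) (a := t1) (b := t2)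
      (B := fun _ => X i - 2 * ε) (B' := fun _ => 0)
      (fun t _ => (hF i t).continuousAt.continuousWithinAt)
      (fun t _ => (hF i t).hasDerivWithinAt) hF1.le (fun t => hasDerivAt_const t _)
      (fun t ht heq => lt_of_le_of_lt (hder t (ht1.trans ht.1) heq.ge) hε1)
      (Set.right_mem_Icc.2 ht2')
    linarith
  obtain ⟨k, hk⟩ := Finite.exists_max (fun i => g (X i))
  have step : ∀ i j, 0 < A i j → g (X i) = g (X k) → g (X j) = g (X k) := by
    intro i j hij hi
    have hall : ∀ m ∈ Finset.univ, A i m * (g (X m) - g (X i)) ≤ 0 := fun m _ =>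
      mul_nonpos_of_nonneg_of_nonpos (hA i m) (by rw [hi]; linarith [hk m])
    have := (Finset.sum_eq_zero_iff_of_nonpos hall).1
      (le_antisymm (Finset.sum_nonpos hall) (sub i)) j (Finset.mem_univ j)
    rcases mul_eq_zero.1 this with h | h
    · linarith
    · linarith
  have hback : g (X r) = g (X k) := by
    have : ∀ v, Relation.ReflTransGen (fun u v => 0 < A v u) r v →
        g (X v) = g (X k) → g (X r) = g (X k) := by
      intro v hv
      induction hv with
      | refl => exact id
      | tail _ hbc ih => exact fun h => ih (step _ _ hbc h)
    exact this k (htree k) rfl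
  intro i ε hε
  have hXi : X i ≤ ν := hν _ (by rw [← hXr, hback]; exact hk i)
  exact (h1 i ε hε).mono fun t ht => by linarith

lemma etc_quad {n : ℕ} (A : Matrix (Fin n) (Fin n) ℝ) (ξ v : Fin n → ℝ)
    (hξA : ∀ j, ∑ i, ξ i * A i j = ξ j * ∑ k, A j k) :
    ∑ i, ξ i * (v i * ∑ j, A i j * (v j - v i))
      = -(1 / 2) * ∑ i, ∑ j, ξ i * A i j * (v i - v j) ^ 2 := by
  have h0 : ∑ i, ∑ j, ξ i * A i j * (v j ^ 2 - v i ^ 2) = 0 := by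
    have e1 : ∑ i, ∑ j, ξ i * A i j * v j ^ 2 = ∑ j, (ξ j * ∑ k, A j k) * v j ^ 2 := by
      rw [Finset.sum_comm]
      refine Finset.sum_congr rfl fun j _ => ?_
      rw [← hξA, Finset.sum_mul]
    have e2 : ∑ i, ∑ j, ξ i * A i j * v i ^ 2 = ∑ j, (ξ j * ∑ k, A j k) * v j ^ 2 := by
      refine Finset.sum_congr rfl fun j _ => ?_
      rw [Finset.mul_sum, Finset.sum_mul]
    simp only [mul_sub, Finset.sum_sub_distrib]
    rw [e1, e2, sub_self]
  have h1 : 2 * ∑ i, ξ i * (v i * ∑ j, A i j * (v j - v i))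
      + ∑ i, ∑ j, ξ i * A i j * (v i - v j) ^ 2
      = ∑ i, ∑ j, ξ i * A i j * (v j ^ 2 - v i ^ 2) := by
    rw [Finset.mul_sum, ← Finset.sum_add_distrib]
    refine Finset.sum_congr rfl fun i _ => ?_
    rw [Finset.mul_sum, Finset.mul_sum, Finset.mul_sum, ← Finset.sum_add_distrib]
    refine Finset.sum_congr rfl fun j _ => ?_
    ring
  linarith

lemma etc_H {g : ℝ → ℝ} (hg : Monotone g) (hgc : Continuous g) (ν : ℝ)
    (hν : ∀ z, g z = g ν → z = ν) (z : ℝ) (hz : z ≠ ν) :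
    0 < ∫ s in ν..z, (g s - g ν) := by
  have hc : Continuous fun s => g s - g ν := by fun_prop
  rcases lt_or_gt_of_ne hz with h | h
  · rw [intervalIntegral.integral_symm, ← intervalIntegral.integral_neg]
    apply intervalIntegral.intervalIntegral_pos_of_pos_on (hc.neg.intervalIntegrable _ _) _ h
    intro s hs
    have h1 : g s ≤ g ν := hg hs.2.le
    have h2 : g s ≠ g ν := fun h => hs.2.ne (hν s h)
    have := lt_of_le_of_ne h1 h2
    simp only [Pi.neg_apply]
    linarith
  · apply intervalIntegral.intervalIntegral_pos_of_pos_on (hc.intervalIntegrable _ _) _ h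
    intro s hs
    have h1 : g ν ≤ g s := hg hs.1.le
    have h2 : g s ≠ g ν := fun h => hs.1.ne' (hν s h)
    have := lt_of_le_of_ne h1 h2.symm
    linarith

lemma etc_pred {n : ℕ} (A : Matrix (Fin n) (Fin n) ℝ)
    (hA : ∀ i j, 0 ≤ A i j) (ξ : Fin n → ℝ) (hξ : ∀ i, 0 ≤ ξ i)
    (hξA : ∀ j, ∑ i, ξ i * A i j = ξ j * ∑ k, A j k) (c b : Fin n)
    (hc : 0 < ξ c) (hcb : 0 < A c b) : 0 < ξ b := by
  refine lt_of_le_of_ne (hξ b) fun h0 => ?_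
  have h1 := hξA b
  rw [← h0, zero_mul] at h1
  have := (Finset.sum_eq_zero_iff_of_nonneg (fun i _ => mul_nonneg (hξ i) (hA i b))).1 h1 c
    (Finset.mem_univ c)
  have := mul_pos hc hcb
  linarith

lemma etc_root_pos {n : ℕ} (r : Fin n) (A : Matrix (Fin n) (Fin n) ℝ)
    (hA : ∀ i j, 0 ≤ A i j)
    (htree : ∀ i, Relation.ReflTransGen (fun u v => 0 < A v u) r i)
    (ξ : Fin n → ℝ) (hξ : ∀ i, 0 ≤ ξ i) (hξ1 : ∑ i, ξ i = 1)
    (hξA : ∀ j, ∑ i, ξ i * A i j = ξ j * ∑ k, A j k) : 0 < ξ r := by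
  have : ∃ c, 0 < ξ c := by
    by_contra hno
    push Not at hno
    have : ∑ i, ξ i ≤ 0 := Finset.sum_nonpos fun i _ => hno i
    linarith
  obtain ⟨c, hc⟩ := this
  have key : ∀ v, Relation.ReflTransGen (fun u v => 0 < A v u) r v → 0 < ξ v → 0 < ξ r := by
    intro v hv
    induction hv with
    | refl => exact id
    | tail _ hbc ih => exact fun h => ih (etc_pred A hA ξ hξ hξA _ _ h hbc)
  exact key c (htree c) hc

lemma etc_equil {n : ℕ} (r : Fin n) (A : Matrix (Fin n) (Fin n) ℝ)
    (hA : ∀ i j, 0 ≤ A i j)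
    (htree : ∀ i, Relation.ReflTransGen (fun u v => 0 < A v u) r i)
    (ξ : Fin n → ℝ) (hξ : ∀ i, 0 ≤ ξ i) (hξ1 : ∑ i, ξ i = 1)
    (hξA : ∀ j, ∑ i, ξ i * A i j = ξ j * ∑ k, A j k)
    (g : ℝ → ℝ) (hg : Monotone g) (ν : ℝ) (hν : ∀ z, g z = g ν → z = ν)
    (w : Fin n → ℝ) (hw : ∑ i, ξ i * w i = ν)
    (hQ : ∑ i, ∑ j, ξ i * A i j * (g (w i) - g (w j)) ^ 2 = 0) :
    ∀ i, 0 < ξ i → w i = ν := by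
  have hnn : ∀ i j, 0 ≤ ξ i * A i j * (g (w i) - g (w j)) ^ 2 := fun i j =>
    mul_nonneg (mul_nonneg (hξ i) (hA i j)) (sq_nonneg _)
  have hedge : ∀ i j, 0 < ξ i → 0 < A i j → g (w i) = g (w j) := by
    intro i j hi hij
    have h1 := (Finset.sum_eq_zero_iff_of_nonneg
      (fun i _ => Finset.sum_nonneg fun j _ => hnn i j)).1 hQ i (Finset.mem_univ i)
    have h2 := (Finset.sum_eq_zero_iff_of_nonneg (fun j _ => hnn i j)).1 h1 j (Finset.mem_univ j)
    have h3 := (mul_eq_zero.1 h2).resolve_left (mul_pos hi hij).ne'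
    exact sub_eq_zero.1 (pow_eq_zero_iff (two_ne_zero) |>.1 h3)
  have hr := etc_root_pos r A hA htree ξ hξ hξ1 hξA
  have hall : ∀ v, Relation.ReflTransGen (fun u v => 0 < A v u) r v → 0 < ξ v →
      g (w v) = g (w r) := by
    intro v hv
    induction hv with
    | refl => exact fun _ => rfl
    | tail _ hbc ih =>
      exact fun h => (hedge _ _ h hbc).trans (ih (etc_pred A hA ξ hξ hξA _ _ h hbc))
  have hz : ∑ i, ξ i * (ν - w i) = 0 := by
    simp only [mul_sub, Finset.sum_sub_distrib]
    rw [hw, ← Finset.sum_mul, hξ1]; ring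
  have hc : g (w r) = g ν := by
    rcases lt_trichotomy (g (w r)) (g ν) with h | h | h
    · exfalso
      have hlt : ∀ i, 0 < ξ i → w i < ν := fun i hi => by
        by_contra hge
        have := hg (not_lt.1 hge)
        rw [hall i (htree i) hi] at this
        linarith
      have : 0 < ∑ i, ξ i * (ν - w i) := by
        apply Finset.sum_pos' _ ⟨r, Finset.mem_univ r, mul_pos hr (by linarith [hlt r hr])⟩
        intro i _
        rcases (hξ i).eq_or_lt with h0 | h0
        · rw [← h0]; simp
        · exact mul_nonneg h0.le (by linarith [hlt i h0])
      linarith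
    · exact h
    · exfalso
      have hlt : ∀ i, 0 < ξ i → ν < w i := fun i hi => by
        by_contra hge
        have := hg (not_lt.1 hge)
        rw [hall i (htree i) hi] at this
        linarith
      have : ∑ i, ξ i * (ν - w i) < 0 := by
        apply Finset.sum_neg' _
          ⟨r, Finset.mem_univ r, mul_neg_of_pos_of_neg hr (by linarith [hlt r hr])⟩
        intro i _
        rcases (hξ i).eq_or_lt with h0 | h0
        · rw [← h0]; simp
        · exact mul_nonpos_of_nonneg_of_nonpos h0.le (by linarith [hlt i h0])
      linarith
  exact fun i hi => hν _ ((hall i (htree i) hi).trans hc)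

lemma etc_root {n : ℕ} (r : Fin n) (A : Matrix (Fin n) (Fin n) ℝ)
    (hA : ∀ i j, 0 ≤ A i j)
    (htree : ∀ i, Relation.ReflTransGen (fun u v => 0 < A v u) r i)
    (ξ : Fin n → ℝ) (hξ : ∀ i, 0 ≤ ξ i) (hξ1 : ∑ i, ξ i = 1)
    (hξA : ∀ j, ∑ i, ξ i * A i j = ξ j * ∑ k, A j k)
    (g : ℝ → ℝ) (hg : Monotone g) (hgc : Continuous g) (hgl : LocallyLipschitz g)
    (ν : ℝ) (hν : ∀ z, g z = g ν → z = ν)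
    (x F : Fin n → ℝ → ℝ) (K C b : ℝ) (hb : 0 < b)
    (hF : ∀ i t, HasDerivAt (F i) (∑ j, A i j * (g (x j t) - g (x i t))) t)
    (hxF : ∀ i t, 0 ≤ t → |x i t - F i t| ≤ C * Real.exp (-b * t))
    (hxF0 : ∀ i, Tendsto (fun t => x i t - F i t) atTop (nhds 0))
    (hKx : ∀ i t, 0 ≤ t → |x i t| ≤ K)
    (hKF : ∀ i t, 0 ≤ t → |F i t| ≤ K)
    (hsum : ∀ t, 0 ≤ t → ∑ i, ξ i * x i t = ν) :
    Tendsto (F r) atTop (nhds ν) := by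
  obtain ⟨Lp, hLp⟩ := (hgl.locallyLipschitzOn (s := Set.Icc (-K) K)).exists_lipschitzOnWith_of_compact
    isCompact_Icc
  set H : ℝ → ℝ := fun z => ∫ s in ν..z, (g s - g ν) with hH
  have hHd : ∀ z, HasDerivAt H (g z - g ν) z := fun z =>
    intervalIntegral.integral_hasDerivAt_right
      ((hgc.sub continuous_const).intervalIntegrable _ _)
      ((hgc.sub continuous_const).stronglyMeasurableAtFilter _ _)
      (hgc.sub continuous_const).continuousAt
  have hHc : Continuous H := continuous_iff_continuousAt.2 fun z => (hHd z).continuousAt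
  have hHν : H ν = 0 := by simp [hH]
  have hHpos : ∀ z, z ≠ ν → 0 < H z := fun z hz => etc_H hg hgc ν hν z hz
  have hH0 : ∀ z, 0 ≤ H z := fun z => by
    by_cases hz : z = ν
    · rw [hz, hHν]
    · exact (hHpos z hz).le
  have hr := etc_root_pos r A hA htree ξ hξ hξ1 hξA
  set D : Fin n → ℝ → ℝ := fun i t => ∑ j, A i j * (g (x j t) - g (x i t)) with hD
  set G : ℝ := g K - g (-K) with hG
  set B : ℝ := ∑ i, ξ i * (Lp * C * ∑ j, A i j * G) with hB
  set Q : (Fin n → ℝ) → ℝ := fun w => ∑ i, ∑ j, ξ i * A i j * (g (w i) - g (w j)) ^ 2 with hQ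
  set W : ℝ → ℝ := fun t => ∑ i, ξ i * H (F i t) with hW
  have hWd : ∀ t, HasDerivAt W (∑ i, ξ i * ((g (F i t) - g ν) * D i t)) t := by
    intro t
    apply HasDerivAt.fun_sum
    intro i _
    exact ((hHd (F i t)).comp t (hF i t)).const_mul (ξ i)
  have hgb : ∀ i t, 0 ≤ t → g (-K) ≤ g (x i t) ∧ g (x i t) ≤ g K := fun i t ht =>
    ⟨hg (abs_le.1 (hKx i t ht)).1, hg (abs_le.1 (hKx i t ht)).2⟩
  have hWle : ∀ t, 0 ≤ t → ∑ i, ξ i * ((g (F i t) - g ν) * D i t)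
      ≤ -(1 / 2) * Q (fun i => x i t) + B * Real.exp (-b * t) := by
    intro t ht
    have hid := etc_quad A ξ (fun i => g (x i t) - g ν) hξA
    simp only [sub_sub_sub_cancel_right] at hid
    have hsplit : ∑ i, ξ i * ((g (F i t) - g ν) * D i t)
        = ∑ i, ξ i * ((g (x i t) - g ν) * D i t)
          + ∑ i, ξ i * ((g (F i t) - g (x i t)) * D i t) := by
      rw [← Finset.sum_add_distrib]
      exact Finset.sum_congr rfl fun i _ => by ring
    rw [hsplit, hid, hB, Finset.sum_mul]
    refine add_le_add le_rfl (Finset.sum_le_sum fun i _ => ?_)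
    rw [mul_assoc]
    refine mul_le_mul_of_nonneg_left ?_ (hξ i)
    have h1 : |g (F i t) - g (x i t)| ≤ Lp * (C * Real.exp (-b * t)) := by
      have := hLp.dist_le_mul (F i t) (abs_le.1 (hKF i t ht)) (x i t) (abs_le.1 (hKx i t ht))
      rw [Real.dist_eq, Real.dist_eq, abs_sub_comm (F i t)] at this
      exact this.trans (mul_le_mul_of_nonneg_left (hxF i t ht) Lp.2)
    have h2 : |D i t| ≤ ∑ j, A i j * G := by
      refine (Finset.abs_sum_le_sum_abs _ _).trans (Finset.sum_le_sum fun j _ => ?_)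
      rw [abs_mul, abs_of_nonneg (hA i j)]
      refine mul_le_mul_of_nonneg_left ?_ (hA i j)
      rw [abs_le]
      have := hgb i t ht
      have := hgb j t ht
      constructor <;> linarith
    calc (g (F i t) - g (x i t)) * D i t ≤ |g (F i t) - g (x i t)| * |D i t| := by
          rw [← abs_mul]; exact le_abs_self _
      _ ≤ (Lp * (C * Real.exp (-b * t))) * ∑ j, A i j * G :=
          mul_le_mul h1 h2 (abs_nonneg _) ((abs_nonneg _).trans h1)
      _ = _ := by ring
  have hCnn : 0 ≤ C := by
    have := (abs_nonneg _).trans (hxF r 0 le_rfl)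
    simpa using this
  have hKnn : 0 ≤ K := (abs_nonneg _).trans (hKx r 0 le_rfl)
  have hGnn : 0 ≤ G := sub_nonneg.2 (hg (by linarith))
  have hBnn : 0 ≤ B := Finset.sum_nonneg fun i _ => mul_nonneg (hξ i)
    (mul_nonneg (mul_nonneg Lp.2 hCnn) (Finset.sum_nonneg fun j _ => mul_nonneg (hA i j) hGnn))
  have hQnn : ∀ w, 0 ≤ Q w := fun w => Finset.sum_nonneg fun i _ => Finset.sum_nonneg fun j _ =>
    mul_nonneg (mul_nonneg (hξ i) (hA i j)) (sq_nonneg _)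
  have hQc : Continuous Q := by
    simp only [hQ]; fun_prop
  set V : ℝ → ℝ := fun t => W t + B / b * Real.exp (-b * t) with hV
  have hVd : ∀ t, HasDerivAt V (∑ i, ξ i * ((g (F i t) - g ν) * D i t)
      - B * Real.exp (-b * t)) t := by
    intro t
    have h1 : HasDerivAt (fun t => Real.exp (-b * t)) (Real.exp (-b * t) * (-b * 1)) t :=
      ((hasDerivAt_id t).const_mul (-b)).exp
    have h2 := (hWd t).add (h1.const_mul (B / b))
    refine h2.congr_deriv ?_
    have h3 : B / b * b = B := div_mul_cancel₀ B hb.ne'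
    linear_combination -Real.exp (-b * t) * h3
  have hVle : ∀ t, 0 ≤ t → ∑ i, ξ i * ((g (F i t) - g ν) * D i t) - B * Real.exp (-b * t)
      ≤ -(1 / 2) * Q (fun i => x i t) := fun t ht => by linarith [hWle t ht]
  have hWnn : ∀ t, 0 ≤ W t := fun t => Finset.sum_nonneg fun i _ => mul_nonneg (hξ i) (hH0 _)
  have hWV : ∀ t, W t ≤ V t := fun t => by
    have : 0 ≤ B / b * Real.exp (-b * t) := by positivity
    simp only [hV]; linarith
  have hVanti : AntitoneOn V (Set.Ici 0) := by
    apply antitoneOn_of_deriv_nonpos (convex_Ici 0)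
    · exact fun t _ => (hVd t).continuousAt.continuousWithinAt
    · exact fun t _ => (hVd t).differentiableAt.differentiableWithinAt
    · intro t ht
      rw [interior_Ici] at ht
      rw [(hVd t).deriv]
      have := hVle t (le_of_lt ht)
      have := hQnn (fun i => x i t)
      linarith
  have hseq : ∀ m : ℕ, ∃ t : ℝ, (m : ℝ) ≤ t ∧ Q (fun i => x i t) < 1 / ((m : ℝ) + 1) := by
    intro m
    by_contra hno
    push Not at hno
    have hp : (0 : ℝ) < 1 / ((m : ℝ) + 1) := by positivity
    refine etc_decay (T := m) (half_pos hp) hVd (fun t ht => ?_)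
      (fun t _ => (hWnn t).trans (hWV t))
    have h1 := hVle t ((Nat.cast_nonneg m).trans ht)
    have h2 := hno t ht
    linarith
  choose τ hτ hτQ using hseq
  have hτ0 : ∀ m, 0 ≤ τ m := fun m => (Nat.cast_nonneg m).trans (hτ m)
  have hτtop : Tendsto τ atTop atTop := tendsto_atTop_mono hτ tendsto_natCast_atTop_atTop
  obtain ⟨w, -, φ, hφ, hw⟩ := (isCompact_univ_pi (fun _ : Fin n => isCompact_Icc
    (a := -K) (b := K))).tendsto_subseq (x := fun m i => x i (τ m))
    (fun m i _ => abs_le.1 (hKx i (τ m) (hτ0 m)))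
  have hwi : ∀ i, Tendsto (fun m => x i (τ (φ m))) atTop (nhds (w i)) :=
    fun i => (tendsto_pi_nhds.1 hw) i
  have hτφ : Tendsto (fun m => τ (φ m)) atTop atTop := hτtop.comp hφ.tendsto_atTop
  have hQw : Q w = 0 := by
    have h1 : Tendsto (fun m => Q (fun i => x i (τ (φ m)))) atTop (nhds (Q w)) :=
      (hQc.tendsto w).comp hw
    have h2 : Tendsto (fun m => Q (fun i => x i (τ (φ m)))) atTop (nhds 0) :=
      squeeze_zero (fun m => hQnn _) (fun m => (hτQ (φ m)).le)
        (tendsto_one_div_add_atTop_nhds_zero_nat.comp hφ.tendsto_atTop)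
    exact tendsto_nhds_unique h1 h2
  have hsw : ∑ i, ξ i * w i = ν := by
    have h1 : Tendsto (fun m => ∑ i, ξ i * x i (τ (φ m))) atTop (nhds (∑ i, ξ i * w i)) :=
      tendsto_finsetSum _ fun i _ => (hwi i).const_mul (ξ i)
    have h2 : (fun m => ∑ i, ξ i * x i (τ (φ m))) = fun _ => ν :=
      funext fun m => hsum _ (hτ0 _)
    rw [h2] at h1
    exact tendsto_nhds_unique h1 tendsto_const_nhds |>.symm ▸ rfl
  have heq := etc_equil r A hA htree ξ hξ hξ1 hξA g hg ν hν w hsw hQw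
  have hFw : ∀ i, Tendsto (fun m => F i (τ (φ m))) atTop (nhds (w i)) := fun i => by
    have := (hwi i).sub ((hxF0 i).comp hτφ)
    simpa using this
  have hWφ : Tendsto (fun m => W (τ (φ m))) atTop (nhds 0) := by
    have h1 : Tendsto (fun m => W (τ (φ m))) atTop (nhds (∑ i, ξ i * H (w i))) :=
      tendsto_finsetSum _ fun i _ => (((hHc.tendsto (w i)).comp (hFw i))).const_mul (ξ i)
    have h2 : ∑ i, ξ i * H (w i) = 0 := Finset.sum_eq_zero fun i _ => by
      rcases (hξ i).eq_or_lt with h0 | h0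
      · rw [← h0, zero_mul]
      · rw [heq i h0, hHν, mul_zero]
    rwa [h2] at h1
  have hexp : Tendsto (fun t => B / b * Real.exp (-b * t)) atTop (nhds 0) := by
    have h1 : Tendsto (fun t : ℝ => -b * t) atTop atBot :=
      tendsto_id.const_mul_atTop_of_neg (by linarith)
    simpa using (Real.tendsto_exp_atBot.comp h1).const_mul (B / b)
  have hVφ : Tendsto (fun m => V (τ (φ m))) atTop (nhds 0) := by
    have := hWφ.add (hexp.comp hτφ)
    rw [add_zero] at this
    exact this
  have hWsmall : ∀ ε, 0 < ε → ∀ᶠ t in atTop, W t < ε := by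
    intro ε hε
    obtain ⟨m, hm⟩ := (hVφ.eventually (gt_mem_nhds hε)).exists
    filter_upwards [eventually_ge_atTop (τ (φ m))] with t ht
    exact (hWV t).trans_lt ((hVanti (hτ0 _) ((hτ0 _).trans ht) ht).trans_lt hm)
  refine (isCompact_Icc (a := -K) (b := K)).tendsto_nhds_of_unique_mapClusterPt
    ((eventually_ge_atTop 0).mono fun t ht => abs_le.1 (hKF r t ht)) fun z _ hz => ?_
  by_contra hne
  have hzp := hHpos z hne
  have hfr := hz.frequently (hHc.continuousAt.eventually (lt_mem_nhds (half_lt_self hzp)))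
  obtain ⟨t, ht1, ht2⟩ := (hfr.and_eventually
    (hWsmall (ξ r * (H z / 2)) (mul_pos hr (half_pos hzp)))).exists
  have h1 : ξ r * H (F r t) ≤ W t :=
    Finset.single_le_sum (f := fun i => ξ i * H (F i t))
      (fun i _ => mul_nonneg (hξ i) (hH0 _)) (Finset.mem_univ r)
  have h2 := mul_lt_mul_of_pos_left ht1 hr
  linarith

lemma etc_scalar_s16 {n : ℕ} (r : Fin n) (A : Matrix (Fin n) (Fin n) ℝ)
    (hA : ∀ i j, 0 ≤ A i j)
    (htree : ∀ i, Relation.ReflTransGen (fun u v => 0 < A v u) r i)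
    (ξ : Fin n → ℝ) (hξ : ∀ i, 0 ≤ ξ i) (hξ1 : ∑ i, ξ i = 1)
    (hξA : ∀ j, ∑ i, ξ i * A i j = ξ j * ∑ k, A j k)
    (g : ℝ → ℝ) (hg : Monotone g) (hgc : Continuous g) (hgl : LocallyLipschitz g)
    (ν : ℝ) (hν : ∀ z, g z = g ν → z = ν)
    (x F E : Fin n → ℝ → ℝ) (C b : ℝ) (hb : 0 < b) (hC : 0 ≤ C)
    (hxc : ∀ i, Continuous (x i))
    (hx : ∀ i t, 0 ≤ t → x i t = F i t + E i t)
    (hF : ∀ i t, HasDerivAt (F i) (∑ j, A i j * (g (x j t) - g (x i t))) t)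
    (hE : ∀ i s t, 0 ≤ s → s ≤ t →
      |E i t - E i s| ≤ C * Real.exp (-b * s) - C * Real.exp (-b * t))
    (hE0 : ∀ i, Tendsto (E i) atTop (nhds 0))
    (hξE : ∀ t, 0 ≤ t → ∑ i, ξ i * E i t = 0)
    (hξx : ∑ i, ξ i * x i 0 = ν) :
    ∀ i, Tendsto (x i) atTop (nhds ν) := by
  have hexp0 : Tendsto (fun t : ℝ => C * Real.exp (-b * t)) atTop (nhds 0) := by
    have h1 : Tendsto (fun t : ℝ => -b * t) atTop atBot :=
      tendsto_id.const_mul_atTop_of_neg (by linarith)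
    simpa using (Real.tendsto_exp_atBot.comp h1).const_mul C
  have hEb : ∀ i s, 0 ≤ s → |E i s| ≤ C * Real.exp (-b * s) := by
    intro i s hs
    have h1 : Tendsto (fun t => |E i t - E i s|) atTop (nhds |0 - E i s|) :=
      ((hE0 i).sub_const (E i s)).abs
    have h2 : Tendsto (fun t => C * Real.exp (-b * s) - C * Real.exp (-b * t)) atTop
        (nhds (C * Real.exp (-b * s) - 0)) := hexp0.const_sub _
    have := le_of_tendsto_of_tendsto h1 h2
      ((eventually_ge_atTop s).mono fun t ht => hE i s t hs ht)
    simpa using this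
  have hNc : Continuous fun t : ℝ => C * Real.exp (-b * t) := by fun_prop
  obtain ⟨K1, hK1⟩ := etc_upper_bdd r A hA g hg x F E (fun t => C * Real.exp (-b * t)) hNc
    (fun t => by positivity) hxc hx hF (fun i s t hs ht => (abs_le.1 (hE i s t hs ht)).2)
  -- the reflected system
  have hg' : Monotone fun z => -g (-z) := fun a c hac => neg_le_neg (hg (neg_le_neg hac))
  have hgc' : Continuous fun z => -g (-z) := by fun_prop
  have hF' : ∀ i t, HasDerivAt (fun t => -F i t)
      (∑ j, A i j * ((fun z => -g (-z)) (-x j t) - (fun z => -g (-z)) (-x i t))) t := by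
    intro i t
    refine (hF i t).fun_neg.congr_deriv ?_
    rw [← Finset.sum_neg_distrib]
    refine Finset.sum_congr rfl fun j _ => ?_
    simp only [neg_neg]
    ring
  obtain ⟨K2, hK2⟩ := etc_upper_bdd r A hA (fun z => -g (-z)) hg' (fun i t => -x i t)
    (fun i t => -F i t) (fun i t => -E i t) (fun t => C * Real.exp (-b * t)) hNc
    (fun t => by positivity) (fun i => (hxc i).neg) (fun i t ht => by rw [hx i t ht]; ring) hF'
    (fun i s t hs ht => by linarith [(abs_le.1 (hE i s t hs ht)).1])
  set K := max K1 K2 + C with hK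
  have hKx' : ∀ i t, 0 ≤ t → |x i t| ≤ max K1 K2 := fun i t ht => abs_le.2
    ⟨by linarith [hK2 i t ht, le_max_right K1 K2], (hK1 i t ht).trans (le_max_left _ _)⟩
  have hKx : ∀ i t, 0 ≤ t → |x i t| ≤ K := fun i t ht => by linarith [hKx' i t ht]
  have hEC : ∀ i t, 0 ≤ t → |E i t| ≤ C := fun i t ht => by
    refine (hEb i t ht).trans (mul_le_of_le_one_right hC (Real.exp_le_one_iff.2 ?_))
    nlinarith
  have hKF : ∀ i t, 0 ≤ t → |F i t| ≤ K := fun i t ht => by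
    have h1 : F i t = x i t - E i t := by rw [hx i t ht]; ring
    rw [h1]
    exact (abs_sub _ _).trans (add_le_add (hKx' i t ht) (hEC i t ht))
  have hxF0 : ∀ i, Tendsto (fun t => x i t - F i t) atTop (nhds 0) := fun i =>
    (hE0 i).congr' ((eventually_ge_atTop 0).mono fun t ht => by
      simp only [hx i t ht]; ring)
  have hsumF : ∀ t, ∑ i, ξ i * F i t = ∑ i, ξ i * F i 0 := by
    intro t
    have hd : ∀ t, HasDerivAt (fun t => ∑ i, ξ i * F i t) 0 t := by
      intro t
      have h1 : HasDerivAt (fun t => ∑ i, ξ i * F i t)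
          (∑ i, ξ i * ∑ j, A i j * (g (x j t) - g (x i t))) t :=
        HasDerivAt.fun_sum fun i _ => (hF i t).const_mul (ξ i)
      refine h1.congr_deriv ?_
      have e1 : ∑ i, ∑ j, ξ i * A i j * g (x j t) = ∑ j, (ξ j * ∑ k, A j k) * g (x j t) := by
        rw [Finset.sum_comm]
        refine Finset.sum_congr rfl fun j _ => ?_
        rw [← hξA, Finset.sum_mul]
      have e2 : ∑ i, ∑ j, ξ i * A i j * g (x i t) = ∑ j, (ξ j * ∑ k, A j k) * g (x j t) := by
        refine Finset.sum_congr rfl fun j _ => ?_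
        rw [Finset.mul_sum, Finset.sum_mul]
      simp only [Finset.mul_sum, mul_sub, Finset.sum_sub_distrib, ← mul_assoc]
      simp only [Finset.mul_sum] at e1 e2
      rw [e1, e2, sub_self]
    exact is_const_of_deriv_eq_zero (fun t => (hd t).differentiableAt) (fun t => (hd t).deriv) t 0
  have hsumxF : ∀ t, 0 ≤ t → ∑ i, ξ i * x i t = ∑ i, ξ i * F i t := by
    intro t ht
    have : ∑ i, ξ i * x i t = ∑ i, ξ i * F i t + ∑ i, ξ i * E i t := by
      rw [← Finset.sum_add_distrib]
      exact Finset.sum_congr rfl fun i _ => by rw [hx i t ht]; ring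
    rw [this, hξE t ht, add_zero]
  have hsum : ∀ t, 0 ≤ t → ∑ i, ξ i * x i t = ν := fun t ht => by
    rw [hsumxF t ht, hsumF t, ← hsumxF 0 le_rfl, hξx]
  have hroot := etc_root r A hA htree ξ hξ hξ1 hξA g hg hgc hgl ν hν x F K C b hb hF
    (fun i t ht => by
      have : x i t - F i t = E i t := by rw [hx i t ht]; ring
      rw [this]; exact hEb i t ht) hxF0 hKx hKF hsum
  have hup := etc_upper_limit r A hA htree g hg hgc x F K hF hxF0 hKF ν hroot (fun z hz => by
    by_contra hlt
    push Not at hlt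
    exact hlt.ne' (hν z (le_antisymm hz (hg hlt.le))))
  have hlo := etc_upper_limit r A hA htree (fun z => -g (-z)) hg' hgc' (fun i t => -x i t)
    (fun i t => -F i t) K hF' (fun i => by
      have := (hxF0 i).neg
      rw [neg_zero] at this
      exact this.congr fun t => by ring)
    (fun i t ht => by rw [abs_neg]; exact hKF i t ht) (-ν) hroot.neg (fun z hz => by
      by_contra hlt
      push Not at hlt
      simp only [neg_neg] at hz
      have h1 : g (-z) ≤ g ν := hg (by linarith)
      have := hν (-z) (le_antisymm h1 (by linarith))
      linarith)
  intro i
  have hFi : Tendsto (F i) atTop (nhds ν) := by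
    rw [Metric.tendsto_nhds]
    intro ε hε
    filter_upwards [hup i ε hε, hlo i ε hε] with t h1 h2
    rw [Real.dist_eq, abs_lt]
    constructor <;> linarith
  simpa using hFi.add (hxF0 i)

/-- Theorem 2, consensus: For a weighted digraph having a
directed spanning tree, with Laplacian `L` and nonnegative left null vector
`ξ` of unit sum, a nonlinear output function `g` satisfying all parts of
Assumption 1 (including the lower Lipschitz bound `|g(x) − g(y)| ≥ ϱ|x − y|`
on `[−h, h]`, extended componentwise to `ℝᵖ`), and measurement errors `e_i`
with `‖e_i(t)‖² ≤ α_i e^{−β_i t}`, any continuous solution of the closed loop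
`x_i(t) = x_i(0) − ∫_0^t Σ_j L_{ij}(g(x_j(s)) + e_j(s)) ds` converges to
`ν = Σ_i ξ_i x_i(0)`, provided `|ν_l| < h` for every component `l`. -/
theorem event_triggered_consensus_spanning_tree {n p : ℕ}
    (A : Matrix (Fin n) (Fin n) ℝ)
    (hA_nonneg : ∀ i j, 0 ≤ A i j)
    (hA_diag : ∀ i, A i i = 0)
    (r : Fin n)
    (htree : ∀ i, Relation.ReflTransGen (fun u v => 0 < A v u) r i)
    (L : Matrix (Fin n) (Fin n) ℝ)
    (hL : ∀ i j, L i j = (if i = j then ∑ k, A i k else 0) - A i j)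
    (ξ : Fin n → ℝ) (hξnonneg : ∀ i, 0 ≤ ξ i) (hξsum : ∑ i, ξ i = 1)
    (hξL : ∀ j, ∑ i, ξ i * L i j = 0)
    (h : ℝ) (hh : 0 < h)
    (g : ℝ → ℝ)
    (hg_cont : Continuous g)
    (hg_mono : Monotone g)
    (hg_strict : StrictMonoOn g (Set.Icc (-h) h))
    (hg_zero : ∀ x, g x = 0 ↔ x = 0)
    (hg_lip : LocallyLipschitz g)
    (ϱ : ℝ) (hϱ : 0 < ϱ)
    (hg_lb : ∀ x ∈ Set.Icc (-h) h, ∀ y ∈ Set.Icc (-h) h,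
      ϱ * |x - y| ≤ |g x - g y|)
    (gv : EuclideanSpace ℝ (Fin p) → EuclideanSpace ℝ (Fin p))
    (hgv : ∀ v l, gv v l = g (v l))
    (α β : Fin n → ℝ) (hα : ∀ i, 0 < α i) (hβ : ∀ i, 0 < β i)
    (e : Fin n → ℝ → EuclideanSpace ℝ (Fin p))
    (he_meas : ∀ i, Measurable (e i))
    (he_bound : ∀ i, ∀ t : ℝ, 0 ≤ t → ‖e i t‖ ^ 2 ≤ α i * Real.exp (-β i * t))
    (x : ℝ → Fin n → EuclideanSpace ℝ (Fin p))
    (hx_cont : ∀ i, ContinuousOn (fun t => x t i) (Set.Ici (0 : ℝ)))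
    (hx_eq : ∀ i, ∀ t : ℝ, 0 ≤ t →
      x t i = x 0 i - ∫ s in (0 : ℝ)..t, ∑ j, L i j • (gv (x s j) + e j s))
    (ν : EuclideanSpace ℝ (Fin p)) (hν : ν = ∑ i, ξ i • x 0 i)
    (hν_lt : ∀ l, |ν l| < h) :
    ∀ i, Tendsto (fun t => x t i) atTop (nhds ν) := by
  have hξA : ∀ j, ∑ i, ξ i * A i j = ξ j * ∑ k, A j k := by
    intro j
    have := hξL j
    simp only [hL, mul_sub, Finset.sum_sub_distrib, mul_ite, mul_zero,
      Finset.sum_ite_eq', Finset.mem_univ, if_true] at this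
    linarith
  have hne : Nonempty (Fin n) := ⟨r⟩
  obtain ⟨k0, hk0⟩ := Finite.exists_min β
  set b : ℝ := β k0 / 2 with hbdef
  have hb : 0 < b := half_pos (hβ k0)
  have heb : ∀ j t, 0 ≤ t → ‖e j t‖ ≤ √(α j) * Real.exp (-b * t) := by
    intro j t ht
    apply le_of_sq_le_sq _ (by positivity)
    rw [mul_pow, Real.sq_sqrt (hα j).le, ← Real.exp_nat_mul]
    refine (he_bound j t ht).trans (mul_le_mul_of_nonneg_left (Real.exp_le_exp.2 ?_) (hα j).le)
    have := mul_le_mul_of_nonneg_right (hk0 j) ht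
    push_cast
    rw [hbdef]
    linarith
  have hexpint : MeasureTheory.IntegrableOn (fun t : ℝ => Real.exp (-b * t)) (Set.Ioi 0) :=
    integrableOn_exp_mul_Ioi (by linarith) 0
  have heint : ∀ j, MeasureTheory.IntegrableOn (e j) (Set.Ioi 0) := by
    intro j
    refine MeasureTheory.Integrable.mono' (hexpint.const_mul (√(α j)))
      (he_meas j).aestronglyMeasurable ?_
    refine (MeasureTheory.ae_restrict_iff' measurableSet_Ioi).2 (Eventually.of_forall fun t ht => ?_)
    exact heb j t (le_of_lt ht)
  have hgvc : Continuous gv := by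
    have : gv = fun v => WithLp.toLp 2 (fun l => g (v l)) := by
      funext v
      ext l
      simp [hgv]
    rw [this]
    fun_prop
  have hgeint : ∀ j t, 0 ≤ t →
      IntervalIntegrable (fun s => gv (x s j) + e j s) MeasureTheory.volume 0 t := by
    intro j t ht
    apply IntervalIntegrable.add
    · apply ContinuousOn.intervalIntegrable
      rw [Set.uIcc_of_le ht]
      exact hgvc.comp_continuousOn ((hx_cont j).mono Set.Icc_subset_Ici_self)
    · rw [intervalIntegrable_iff_integrableOn_Ioc_of_le ht]
      exact (heint j).mono_set Set.Ioc_subset_Ioi_self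
  -- scalar components
  have hcomp : ∀ l i, Tendsto (fun t => x t i l) atTop (nhds (ν l)) := by
    intro l
    set w : Fin n → ℝ → ℝ := fun i s => ∑ j, L i j * e j s l with hw
    set X : Fin n → ℝ → ℝ := fun i t => x (max t 0) i l with hX
    have hXc : ∀ i, Continuous (X i) := by
      intro i
      have h1 : Continuous fun t : ℝ => x (max t 0) i :=
        (hx_cont i).comp_continuous (by fun_prop) (fun t => le_max_right t 0)
      exact (EuclideanSpace.proj (𝕜 := ℝ) l).continuous.comp h1
    have hwint : ∀ i, MeasureTheory.IntegrableOn (w i) (Set.Ioi 0) := by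
      intro i
      refine MeasureTheory.integrable_finsetSum _ fun j _ => ?_
      exact ((EuclideanSpace.proj (𝕜 := ℝ) l).integrable_comp (heint j)).const_mul (L i j)
    have hwint' : ∀ i t, 0 ≤ t → MeasureTheory.IntegrableOn (w i) (Set.Ioi t) := fun i t ht =>
      (hwint i).mono_set (Set.Ioi_subset_Ioi ht)
    have hwii : ∀ i s t, 0 ≤ s → s ≤ t → IntervalIntegrable (w i) MeasureTheory.volume s t := by
      intro i s t hs hst
      rw [intervalIntegrable_iff_integrableOn_Ioc_of_le hst]
      exact (hwint' i s hs).mono_set Set.Ioc_subset_Ioi_self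
    set C1 : ℝ := ∑ i, ∑ j, |L i j| * √(α j) with hC1
    have hC1nn : 0 ≤ C1 := Finset.sum_nonneg fun i _ => Finset.sum_nonneg fun j _ => by positivity
    have hwb : ∀ i s, 0 ≤ s → |w i s| ≤ C1 * Real.exp (-b * s) := by
      intro i s hs
      have h1 : |w i s| ≤ (∑ j, |L i j| * √(α j)) * Real.exp (-b * s) := by
        rw [Finset.sum_mul]
        refine (Finset.abs_sum_le_sum_abs _ _).trans (Finset.sum_le_sum fun j _ => ?_)
        rw [abs_mul, mul_assoc]
        refine mul_le_mul_of_nonneg_left ?_ (abs_nonneg _)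
        exact (PiLp.norm_apply_le (e j s) l).trans (heb j s hs)
      refine h1.trans (mul_le_mul_of_nonneg_right ?_ (Real.exp_pos _).le)
      exact Finset.single_le_sum (f := fun i => ∑ j, |L i j| * √(α j))
        (fun i _ => Finset.sum_nonneg fun j _ => by positivity) (Finset.mem_univ i)
    set E : Fin n → ℝ → ℝ := fun i t => ∫ s in Set.Ioi t, w i s with hE
    set D : Fin n → ℝ → ℝ := fun i t => ∑ j, A i j * (g (X j t) - g (X i t)) with hD
    have hDc : ∀ i, Continuous (D i) := by
      intro i
      simp only [hD]
      fun_prop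
    set F : Fin n → ℝ → ℝ := fun i t => (X i 0 - E i 0) + ∫ s in (0:ℝ)..t, D i s with hF
    have hEdiff : ∀ i s t, 0 ≤ s → s ≤ t → E i s - E i t = ∫ τ in s..t, w i τ := fun i s t hs hst =>
      intervalIntegral.integral_Ioi_sub_Ioi (hwint' i s hs) hst
    have hFd : ∀ i t, HasDerivAt (F i) (∑ j, A i j * (g (X j t) - g (X i t))) t := by
      intro i t
      exact (intervalIntegral.integral_hasDerivAt_right ((hDc i).intervalIntegrable _ _)
        ((hDc i).stronglyMeasurableAtFilter _ _) (hDc i).continuousAt).const_add _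
    have hLD : ∀ i (u : Fin n → ℝ), ∑ j, L i j * u j = -∑ j, A i j * (u j - u i) := by
      intro i u
      simp only [hL, sub_mul, mul_sub, Finset.sum_sub_distrib, ite_mul, zero_mul,
        Finset.sum_ite_eq, Finset.mem_univ, if_true, ← Finset.sum_mul]
      ring
    have hXeq : ∀ i t, 0 ≤ t → X i t = F i t + E i t := by
      intro i t ht
      have hii : IntervalIntegrable (fun s => ∑ j, L i j • (gv (x s j) + e j s))
          MeasureTheory.volume 0 t := by
        rw [intervalIntegrable_iff_integrableOn_Ioc_of_le ht]
        refine MeasureTheory.integrable_finsetSum _ fun j _ => ?_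
        have := hgeint j t ht
        rw [intervalIntegrable_iff_integrableOn_Ioc_of_le ht] at this
        exact this.smul (L i j)
      have h1 := congrArg (fun v => v l) (hx_eq i t ht)
      have h2 := (EuclideanSpace.proj (𝕜 := ℝ) l).intervalIntegral_comp_comm hii
      have h3 : X i t = x t i l := by simp only [hX, max_eq_left ht]
      have h4 : X i 0 = x 0 i l := by simp only [hX, max_self]
      have h5 : (∫ s in (0:ℝ)..t, ∑ j, L i j • (gv (x s j) + e j s)) l
          = ∫ s in (0:ℝ)..t, (-D i s + w i s) := by
        refine Eq.trans h2.symm (intervalIntegral.integral_congr fun s hs => ?_)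
        rw [Set.uIcc_of_le ht] at hs
        have h6 : ∀ j, X j s = x s j l := fun j => by simp only [hX, max_eq_left hs.1]
        have h7 := hLD i (fun j => g (X j s))
        simp only [hD, hw]
        rw [← h7, ← Finset.sum_add_distrib]
        simp [hgv, h6]
      have h8 : x t i l = x 0 i l - (∫ s in (0:ℝ)..t, ∑ j, L i j • (gv (x s j) + e j s)) l := h1
      have h9 : IntervalIntegrable (fun s => -D i s) MeasureTheory.volume 0 t :=
        (hDc i).neg.intervalIntegrable _ _
      rw [h3, h8, h5, intervalIntegral.integral_add h9
        (hwii i 0 t le_rfl ht), intervalIntegral.integral_neg, ← hEdiff i 0 t le_rfl ht]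
      simp only [hF]
      rw [h4]
      ring
    have hEinc : ∀ i s t, 0 ≤ s → s ≤ t →
        |E i t - E i s| ≤ C1 / b * Real.exp (-b * s) - C1 / b * Real.exp (-b * t) := by
      intro i s t hs hst
      rw [abs_sub_comm, hEdiff i s t hs hst]
      have hc : Continuous fun τ : ℝ => C1 * Real.exp (-b * τ) := by fun_prop
      have h1 : ‖∫ τ in s..t, w i τ‖ ≤ ∫ τ in s..t, C1 * Real.exp (-b * τ) :=
        intervalIntegral.norm_integral_le_of_norm_le hst
          (Eventually.of_forall fun τ hτ => hwb i τ (hs.trans hτ.1.le))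
          (hc.intervalIntegrable _ _)
      have h2 : ∫ τ in s..t, C1 * Real.exp (-b * τ)
          = -(C1 / b) * Real.exp (-b * t) - -(C1 / b) * Real.exp (-b * s) := by
        apply intervalIntegral.integral_eq_sub_of_hasDerivAt
          (f := fun τ => -(C1 / b) * Real.exp (-b * τ)) _ (hc.intervalIntegrable _ _)
        intro τ _
        have h3 : HasDerivAt (fun t => Real.exp (-b * t)) (Real.exp (-b * τ) * (-b * 1)) τ :=
          ((hasDerivAt_id τ).const_mul (-b)).exp
        refine (h3.const_mul (-(C1 / b))).congr_deriv ?_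
        have h4 : C1 / b * b = C1 := div_mul_cancel₀ C1 hb.ne'
        linear_combination Real.exp (-b * τ) * h4
      rw [h2] at h1
      rw [Real.norm_eq_abs] at h1
      linarith
    have hE0 : ∀ i, Tendsto (E i) atTop (nhds 0) := by
      intro i
      have h1 := MeasureTheory.intervalIntegral_tendsto_integral_Ioi 0 (hwint i) tendsto_id
      have h2 := h1.const_sub (E i 0)
      have h3 : E i 0 - ∫ s in Set.Ioi 0, w i s = 0 := sub_self _
      rw [h3] at h2
      refine h2.congr' ((eventually_ge_atTop 0).mono fun t ht => ?_)
      have := hEdiff i 0 t le_rfl ht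
      simp only [id]
      linarith
    have hξE : ∀ t, 0 ≤ t → ∑ i, ξ i * E i t = 0 := by
      intro t ht
      simp only [hE, ← MeasureTheory.integral_const_mul]
      rw [← MeasureTheory.integral_finsetSum _ fun i _ => (hwint' i t ht).const_mul (ξ i)]
      have : ∀ s, ∑ i, ξ i * w i s = 0 := by
        intro s
        simp only [hw, Finset.mul_sum]
        rw [Finset.sum_comm]
        refine Finset.sum_eq_zero fun j _ => ?_
        have := hξL j
        simp only [← mul_assoc]
        rw [← Finset.sum_mul, this, zero_mul]
      simp [this]
    have hξX : ∑ i, ξ i * X i 0 = ν l := by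
      rw [hν]
      simp [hX]
    have hνg : ∀ z, g z = g (ν l) → z = ν l := by
      intro z hz
      obtain ⟨ha, hb'⟩ := abs_lt.1 (hν_lt l)
      rcases lt_trichotomy z (ν l) with h1 | h1 | h1
      · exfalso
        have h2 := hg_strict (a := max z (-h)) ⟨le_max_right _ _, max_le (by linarith) (by linarith)⟩
          (b := ν l) ⟨ha.le, hb'.le⟩ (max_lt h1 ha)
        have h3 := hg_mono (le_max_left z (-h))
        linarith
      · exact h1
      · exfalso
        have h2 := hg_strict (a := ν l) ⟨ha.le, hb'.le⟩
          (b := min z h) ⟨le_min (by linarith) (by linarith), min_le_right _ _⟩ (lt_min h1 hb')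
        have h3 := hg_mono (min_le_left z h)
        linarith
    intro i
    have := etc_scalar_s16 r A hA_nonneg htree ξ hξnonneg hξsum hξA g hg_mono hg_cont hg_lip (ν l) hνg
      X F E (C1 / b) b hb (by positivity) hXc hXeq hFd hEinc hE0 hξE hξX i
    exact this.congr' ((eventually_ge_atTop 0).mono fun t ht => by
      simp only [hX, max_eq_left ht])
  intro i
  have h1 : Tendsto (fun t => WithLp.ofLp (x t i)) atTop (nhds (WithLp.ofLp ν)) :=
    tendsto_pi_nhds.2 fun l => hcomp l i
  exact ((PiLp.continuous_toLp 2 _).tendsto _).comp h1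
end
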